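/- arXiv:2009.05892 — 3 statements merged into one kernel-verified Lean document; each statement's English description precedes it below -/
import Mathlib

section
/- Under the global causal null (formalized as: the treatment assignments A_1,…,A_n are independent {0,1}-valued random variables with P(A_i = 1) = μ_i, and the vector (A_1,…,A_n) is independent of the σ-algebra 𝒢 generated by all outcomes and covariates), for every α ∈ (0,1), the i-bet test controls the type-I error: P(∃ t ∈ {1,…,n−|I_0|} : M_t ≥ 1/α) ≤ α, regardless of how the predictable choices π_t and w_t are made. -/
open MeasureTheory ProbabilityTheory
open scoped ENNReal

/-!
Until unit `i` is revealed, everything known so far is a function of the outcomes, the covariates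
and the assignments other than `A i`, hence independent of `A i`. The next unit is chosen from that
knowledge among the unrevealed ones, so given the past its assignment still has mean `μ i`: every
bet is fair and the wealth is a nonnegative martingale started at `1`. The maximal inequality then
bounds the probability that it ever reaches `1 / α`.
-/

section TraceLE

variable {Ω ι β : Type*} {m m₁ m₂ H : MeasurableSpace Ω} {D : Set Ω}

/-- The trace of the σ-algebra `m` on the event `D` is contained in `H`: information in `m` reduces
to information in `H` once `D` is known to have occurred. -/
def TraceLE (m H : MeasurableSpace Ω) (D : Set Ω) : Prop :=
  ∀ B, MeasurableSet[m] B → MeasurableSet[H] (B ∩ D)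

namespace TraceLE

lemma of_le (hmH : m ≤ H) (hD : MeasurableSet[H] D) : TraceLE m H D :=
  fun B hB => (hmH B hB).inter hD

lemma measurableSet (h : TraceLE m H D) : MeasurableSet[H] D := by
  simpa using h Set.univ .univ

lemma inter_left (h : TraceLE m H D) {E : Set Ω} (hE : MeasurableSet[m] E) :
    TraceLE m H (E ∩ D) := fun B hB => by
  simpa only [Set.inter_assoc] using h (B ∩ E) (hB.inter hE)

lemma sup (h₁ : TraceLE m₁ H D) (h₂ : TraceLE m₂ H D) : TraceLE (m₁ ⊔ m₂) H D := by
  have le_map_comap {m : MeasurableSpace Ω} (h : TraceLE m H D) :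
      m ≤ (H.comap ((↑) : D → Ω)).map (↑) := fun B hB => ⟨B ∩ D, h B hB, by simp⟩
  intro B hB
  have hB_trace := sup_le (le_map_comap h₁) (le_map_comap h₂) B hB
  simpa [Set.inter_comm] using h₁.measurableSet.subtype_image hB_trace

lemma comap_eval [Countable ι] [MeasurableSpace ι] [MeasurableSingletonClass ι]
    [MeasurableSpace β] {X : ι → Ω → β} {p : Ω → ι} (h : TraceLE m H D) (hp : Measurable[m] p)
    (hX : ∀ ω ∈ D, Measurable[H] (X (p ω))) :
    TraceLE (MeasurableSpace.comap (fun ω => X (p ω) ω) inferInstance) H D := by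
  rintro _ ⟨s, hs, rfl⟩
  have split_by_index : (fun ω => X (p ω) ω) ⁻¹' s ∩ D =
      ⋃ j ∈ p '' D, X j ⁻¹' s ∩ (p ⁻¹' {j} ∩ D) := by
    ext ω
    simp only [Set.mem_inter_iff, Set.mem_preimage, Set.mem_iUnion, Set.mem_singleton_iff]
    constructor
    · rintro ⟨hs, hD⟩
      exact ⟨p ω, Set.mem_image_of_mem p hD, hs, rfl, hD⟩
    · rintro ⟨_, _, hs, rfl, hD⟩
      exact ⟨hs, hD⟩
  rw [split_by_index]
  refine MeasurableSet.biUnion (Set.to_countable _) ?_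
  rintro _ ⟨ω, hω, rfl⟩
  exact (hX ω hω hs).inter (h _ (hp (measurableSet_singleton _)))

end TraceLE

end TraceLE

section Conditioning

variable {Ω ι : Type*} {m H K m0 : MeasurableSpace Ω} {P : Measure Ω} {D : Set Ω}

lemma condExp_ae_eq_integral_on_of_traceLE [IsFiniteMeasure P] (hm : m ≤ m0) (hH : H ≤ m0)
    (hK : K ≤ m0) (hKH : Indep K H P) (hD : MeasurableSet[m] D) (htrace : TraceLE m H D)
    {f : Ω → ℝ} (hf : StronglyMeasurable[K] f) (hf_int : Integrable f P) :
    ∀ᵐ ω ∂P, ω ∈ D → P[f | m] ω = P[f] := by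
  have hD0 := hm D hD
  have setIntegral_eq (B : Set Ω) (hB : MeasurableSet[m] B) :
      ∫ ω in B, D.indicator (fun _ => P[f]) ω ∂P = ∫ ω in B, D.indicator f ω ∂P := by
    rw [setIntegral_indicator hD0, setIntegral_indicator hD0,
      ← setIntegral_condExp hH hf_int (htrace B hB)]
    exact setIntegral_congr_ae (hH _ (htrace B hB))
      ((condExp_indep_eq hK hH hf hKH).mono fun _ h _ => h.symm)
  have condExp_indicator_eq : D.indicator (fun _ => P[f]) =ᵐ[P] P[D.indicator f | m] :=
    ae_eq_condExp_of_forall_setIntegral_eq hm (hf_int.indicator hD0)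
      (fun _ _ _ => ((integrable_const _).indicator hD0).integrableOn)
      (fun B hB _ => setIntegral_eq B hB)
      (stronglyMeasurable_const.indicator hD).aestronglyMeasurable
  filter_upwards [condExp_indicator_eq, condExp_indicator hf_int hD] with ω h₁ h₂ hω
  simpa [hω] using (h₁.trans h₂).symm

lemma indep_iSup_ne {m : ι → MeasurableSpace Ω} (hm : ∀ i, m i ≤ m0) (h : iIndep m P) (i : ι) :
    Indep (m i) (⨆ j ∈ ({i}ᶜ : Set ι), m j) P := by
  simpa using indep_iSup_of_disjoint hm h (disjoint_compl_right (a := {i}))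

lemma condExp_eval_ae_eq [Countable ι] [MeasurableSpace ι] [MeasurableSingletonClass ι]
    {X : ι → Ω → ℝ} {p : Ω → ι} (hp : Measurable[m] p) (hX : ∀ i, Integrable (X i) P)
    (hXp : Integrable (fun ω => X (p ω) ω) P) :
    P[fun ω => X (p ω) ω | m] =ᵐ[P] fun ω => P[X (p ω) | m] ω := by
  have ae_eq_on_fiber (i : ι) :
      ∀ᵐ ω ∂P, p ω = i → P[fun ω => X (p ω) ω | m] ω = P[X i | m] ω := by
    have hi : MeasurableSet[m] (p ⁻¹' {i}) := hp (measurableSet_singleton i)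
    have indicator_eq :
        (p ⁻¹' {i}).indicator (fun ω => X (p ω) ω) = (p ⁻¹' {i}).indicator (X i) :=
      Set.indicator_congr fun ω hω => by rw [show p ω = i from hω]
    have h_eval := condExp_indicator hXp hi
    rw [indicator_eq] at h_eval
    filter_upwards [h_eval, condExp_indicator (hX i) hi] with ω h₁ h₂ hω
    simpa [hω] using h₁.symm.trans h₂
  filter_upwards [ae_all_iff.2 ae_eq_on_fiber] with ω h using h _ rfl

lemma memLp_eval [Finite ι] [MeasurableSpace ι] [MeasurableSingletonClass ι] {q : ℝ≥0∞}
    {X : ι → Ω → ℝ} {p : Ω → ι} (hp : Measurable p) (hX : ∀ i, MemLp (X i) q P) :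
    MemLp (fun ω => X (p ω) ω) q P := by
  classical
  have := Fintype.ofFinite ι
  have eval_eq_sum : (fun ω => X (p ω) ω) = fun ω => ∑ i, (p ⁻¹' {i}).indicator (X i) ω := by
    ext ω
    simp [Set.indicator_apply]
  rw [eval_eq_sum]
  exact memLp_finsetSum _ fun i _ => (hX i).indicator (hp (measurableSet_singleton i))

end Conditioning

section MaximalInequality

variable {Ω : Type*} {m0 : MeasurableSpace Ω} {P : Measure Ω} {c : ℝ} {T : ℕ}

lemma measure_exists_ge_le_of_martingale [IsFiniteMeasure P] {ℱ : Filtration ℕ m0}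
    {f : ℕ → Ω → ℝ} (hf : Martingale f ℱ P) (hf_nonneg : 0 ≤ᵐ[P] f T) (hc : 0 < c) :
    P {ω | ∃ t ≤ T, c ≤ f t ω} ≤ ENNReal.ofReal (P[f 0] / c) := by
  let S := {ω | c ≤ (Finset.range (T + 1)).sup' Finset.nonempty_range_add_one fun t => f⁺ t ω}
  have maximal : ENNReal.ofReal c * P S ≤ ENNReal.ofReal (∫ ω in S, f⁺ T ω ∂P) :=
    ENNReal.ofReal_eq_coe_nnreal hc.le ▸
      maximal_ineq hf.submartingale.pos (posPart_nonneg f) (ε := ⟨c, hc.le⟩) T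
  have setIntegral_le : ∫ ω in S, f⁺ T ω ∂P ≤ P[f 0] := calc
    ∫ ω in S, f⁺ T ω ∂P ≤ ∫ ω, f⁺ T ω ∂P :=
      setIntegral_le_integral (hf.submartingale.pos.integrable T)
        (ae_of_all _ fun ω => posPart_nonneg f T ω)
    _ = ∫ ω, f T ω ∂P := integral_congr_ae (hf_nonneg.mono fun _ h => sup_eq_left.2 h)
    _ = P[f 0] := by simpa using (hf.setIntegral_eq (Nat.zero_le T) .univ).symm
  have crossing_subset : {ω | ∃ t ≤ T, c ≤ f t ω} ⊆ S := by
    rintro ω ⟨t, ht, hct⟩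
    refine hct.trans ((le_sup_left : f t ω ≤ f⁺ t ω).trans ?_)
    exact Finset.le_sup' (fun t => f⁺ t ω) (Finset.mem_range_succ_iff.2 ht)
  rw [ENNReal.ofReal_div_of_pos hc,
    ENNReal.le_div_iff_mul_le (.inl (by simpa)) (.inl ENNReal.ofReal_ne_top), mul_comm]
  calc ENNReal.ofReal c * P {ω | ∃ t ≤ T, c ≤ f t ω} ≤ ENNReal.ofReal c * P S := by gcongr
    _ ≤ ENNReal.ofReal (P[f 0]) := maximal.trans (ENNReal.ofReal_le_ofReal setIntegral_le)

/-- A sequence of σ-algebras that increases up to the horizon `T`, made into a filtration by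
stopping it at `T`. -/
def horizonFiltration (ℱ : ℕ → MeasurableSpace Ω) (T : ℕ) (hle : ∀ t ≤ T, ℱ t ≤ m0)
    (hmono : ∀ t < T, ℱ t ≤ ℱ (t + 1)) : Filtration ℕ m0 where
  seq t := ℱ (min t T)
  mono' := monotone_nat_of_le_succ fun t => by
    rcases lt_or_ge t T with ht | ht
    · simpa [ht.le, Nat.succ_le_of_lt ht] using hmono t ht
    · simp [ht, ht.trans t.le_succ]
  le' t := hle _ (min_le_right t T)

variable {ℱ : ℕ → MeasurableSpace Ω} {hle : ∀ t ≤ T, ℱ t ≤ m0} {hmono : ∀ t < T, ℱ t ≤ ℱ (t + 1)}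

lemma horizonFiltration_apply_of_le {t : ℕ} (ht : t ≤ T) :
    horizonFiltration ℱ T hle hmono t = ℱ t :=
  congrArg ℱ (min_eq_left ht)

variable {F : ℕ → Ω → ℝ}

lemma stronglyAdapted_prod_range_min
    (hF_meas : ∀ t < T, StronglyMeasurable[ℱ (t + 1)] (F t)) :
    StronglyAdapted (horizonFiltration ℱ T hle hmono)
      fun t => ∏ j ∈ Finset.range (min t T), F j := fun t =>
  Finset.stronglyMeasurable_prod _ fun j hj => by
    obtain ⟨hjt, hjT⟩ := lt_min_iff.1 (Finset.mem_range.1 hj)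
    have hF_j := hF_meas j hjT
    rw [← horizonFiltration_apply_of_le (hle := hle) (hmono := hmono) hjT] at hF_j
    exact hF_j.mono ((horizonFiltration ℱ T hle hmono).mono hjt)

lemma martingale_prod_range_min [IsFiniteMeasure P]
    (hF_meas : ∀ t < T, StronglyMeasurable[ℱ (t + 1)] (F t)) (hF_bdd : ∀ t < T, MemLp (F t) ∞ P)
    (hF_fair : ∀ t < T, P[F t | ℱ t] =ᵐ[P] 1) :
    Martingale (fun t => ∏ j ∈ Finset.range (min t T), F j)
      (horizonFiltration ℱ T hle hmono) P := by
  have adapted := stronglyAdapted_prod_range_min (hle := hle) (hmono := hmono) hF_meas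
  have integrable_prod {t : ℕ} (ht : t ≤ T) : Integrable (∏ j ∈ Finset.range t, F j) P := by
    have bounded := MemLp.prod fun j hj => hF_bdd j ((Finset.mem_range.1 hj).trans_le ht)
    exact bounded.integrable (by simp)
  refine martingale_nat adapted (fun t => integrable_prod (min_le_right t T)) fun t => ?_
  have adapted_t := adapted t
  rcases lt_or_ge t T with ht | ht
  · rw [horizonFiltration_apply_of_le ht.le] at adapted_t ⊢
    simp only [min_eq_left ht.le, min_eq_left (Nat.succ_le_of_lt ht)] at adapted_t ⊢
    have pull_out := condExp_mul_of_stronglyMeasurable_left adapted_t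
      (Finset.prod_range_succ F t ▸ integrable_prod ht) ((hF_bdd t ht).integrable le_top)
    rw [Finset.prod_range_succ]
    filter_upwards [pull_out, hF_fair t ht] with ω h_pull h_fair
    simp [h_pull, h_fair]
  · simp only [min_eq_right ht, min_eq_right (ht.trans t.le_succ)] at adapted_t ⊢
    exact .of_eq (condExp_of_stronglyMeasurable _ adapted_t (integrable_prod le_rfl)).symm

lemma measure_exists_prod_range_ge_le [IsProbabilityMeasure P] (hle : ∀ t ≤ T, ℱ t ≤ m0)
    (hmono : ∀ t < T, ℱ t ≤ ℱ (t + 1))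
    (hF_meas : ∀ t < T, StronglyMeasurable[ℱ (t + 1)] (F t)) (hF_bdd : ∀ t < T, MemLp (F t) ∞ P)
    (hF_nonneg : ∀ t < T, 0 ≤ᵐ[P] F t) (hF_fair : ∀ t < T, P[F t | ℱ t] =ᵐ[P] 1) (hc : 0 < c) :
    P {ω | ∃ t ≤ T, c ≤ ∏ j ∈ Finset.range t, F j ω} ≤ ENNReal.ofReal (1 / c) := by
  have prod_nonneg : 0 ≤ᵐ[P] ∏ j ∈ Finset.range (min T T), F j := by
    have all_nonneg : ∀ᵐ ω ∂P, ∀ t < T, 0 ≤ F t ω :=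
      ae_all_iff.2 fun t => Filter.eventually_imp_distrib_left.2 (hF_nonneg t)
    filter_upwards [all_nonneg] with ω hω
    simpa using Finset.prod_nonneg fun j hj => hω j (Finset.mem_range.1 hj)
  have crossing := measure_exists_ge_le_of_martingale
    (martingale_prod_range_min (hle := hle) (hmono := hmono) hF_meas hF_bdd hF_fair) prod_nonneg hc
  refine (measure_mono ?_).trans (crossing.trans_eq (by simp))
  rintro ω ⟨t, ht, hct⟩
  exact ⟨t, ht, by simpa [min_eq_left ht] using hct⟩

end MaximalInequality

section SequentialReveal

variable {Ω ι β : Type*} [MeasurableSpace ι] [MeasurableSpace β] [DecidableEq ι]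

/-- The observations `X i` are revealed one at a time over `T` rounds, each at an index chosen from
the information gathered so far. Here `I t` is the set of indices revealed after round `t` and
`ℱ t` the information then available, consisting of `𝒢` and the revealed observations; rounds
are numbered from `1`, so the index revealed in round `t + 1` is `p (t + 1)`. -/
structure SequentialReveal (𝒢 : MeasurableSpace Ω) (X : ι → Ω → β) (I₀ : Finset ι) (T : ℕ)
    (p : ℕ → Ω → ι) (I : ℕ → Ω → Finset ι) (ℱ : ℕ → MeasurableSpace Ω) : Prop where
  revealed_zero : ∀ ω, I 0 ω = I₀
  revealed_succ : ∀ t < T, ∀ ω, I (t + 1) ω = insert (p (t + 1) ω) (I t ω)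
  info_zero : ℱ 0 = 𝒢 ⊔ ⨆ i ∈ I₀, MeasurableSpace.comap (X i) inferInstance
  info_succ : ∀ t < T, ℱ (t + 1) =
    ℱ t ⊔ MeasurableSpace.comap (fun ω => X (p (t + 1) ω) ω) inferInstance
  measurable_index : ∀ t < T, Measurable[ℱ t] (p (t + 1))
  index_notMem : ∀ t < T, ∀ ω, p (t + 1) ω ∉ I t ω

namespace SequentialReveal

variable {𝒢 H m0 : MeasurableSpace Ω} {X : ι → Ω → β} {I₀ : Finset ι} {T t : ℕ}
  {p : ℕ → Ω → ι} {I : ℕ → Ω → Finset ι} {ℱ : ℕ → MeasurableSpace Ω}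

lemma info_mono (R : SequentialReveal 𝒢 X I₀ T p I ℱ) (ht : t < T) : ℱ t ≤ ℱ (t + 1) :=
  R.info_succ t ht ▸ le_sup_left

lemma measurable_eval (R : SequentialReveal 𝒢 X I₀ T p I ℱ) (ht : t < T) :
    Measurable[ℱ (t + 1)] fun ω => X (p (t + 1) ω) ω :=
  measurable_iff_comap_le.2 (R.info_succ t ht ▸ le_sup_right)

variable [Countable ι] [MeasurableSingletonClass ι]

lemma info_le (R : SequentialReveal 𝒢 X I₀ T p I ℱ) (h𝒢 : 𝒢 ≤ m0) (hX : ∀ i, Measurable (X i))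
    (ht : t ≤ T) : ℱ t ≤ m0 := by
  induction t with
  | zero => exact R.info_zero ▸ sup_le h𝒢 (iSup₂_le fun i _ => (hX i).comap_le)
  | succ t ih =>
    have hp : Measurable (p (t + 1)) := (R.measurable_index t ht).mono (ih (by lia)) le_rfl
    have h_eval : Measurable fun ω => X (p (t + 1) ω) ω :=
      (measurable_from_prod_countable_right (f := fun q : ι × Ω => X q.1 q.2) hX).comp
        (hp.prodMk measurable_id)
    exact R.info_succ t ht ▸ sup_le (ih (by lia)) h_eval.comap_le

lemma traceLE_notMem (R : SequentialReveal 𝒢 X I₀ T p I ℱ) {i : ι} (h𝒢 : 𝒢 ≤ H)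
    (hX : ∀ j ≠ i, Measurable[H] (X j)) (ht : t ≤ T) : TraceLE (ℱ t) H {ω | i ∉ I t ω} := by
  induction t with
  | zero =>
    by_cases hi : i ∈ I₀
    · intro B _
      simp [R.revealed_zero, hi]
    · refine .of_le (R.info_zero ▸ sup_le h𝒢 (iSup₂_le fun j hj => (hX j ?_).comap_le)) ?_
      · exact ne_of_mem_of_not_mem hj hi
      · simp [R.revealed_zero]
  | succ t ih =>
    have notMem_succ : {ω | i ∉ I (t + 1) ω} = p (t + 1) ⁻¹' {i}ᶜ ∩ {ω | i ∉ I t ω} := by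
      ext ω
      simp [R.revealed_succ t ht, eq_comm]
    have hp := R.measurable_index t ht
    rw [notMem_succ, R.info_succ t ht]
    have past := (ih (by lia)).inter_left (hp (measurableSet_singleton i).compl)
    exact past.sup (past.comap_eval hp fun ω hω => hX _ hω.1)

variable {P : Measure Ω}

lemma condExp_eval [IsFiniteMeasure P] (R : SequentialReveal 𝒢 X I₀ T p I ℱ) (h𝒢 : 𝒢 ≤ m0)
    (hX : ∀ i, Measurable (X i))
    (hindep : iIndep (fun j : Option ι =>
      j.elim 𝒢 fun i => MeasurableSpace.comap (X i) inferInstance) P)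
    {Y : ι → Ω → ℝ} (hYX : ∀ i, Measurable[MeasurableSpace.comap (X i) inferInstance] (Y i))
    (hY : ∀ i, Integrable (Y i) P) (ht : t < T)
    (hYp : Integrable (fun ω => Y (p (t + 1) ω) ω) P) :
    P[fun ω => Y (p (t + 1) ω) ω | ℱ t] =ᵐ[P] fun ω => P[Y (p (t + 1) ω)] := by
  let 𝒮 : Option ι → MeasurableSpace Ω :=
    fun j => j.elim 𝒢 fun i => MeasurableSpace.comap (X i) inferInstance
  have h𝒮 : ∀ j, 𝒮 j ≤ m0 := Option.rec h𝒢 fun i => (hX i).comap_le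
  have condExp_eq_on_fiber (i : ι) :
      ∀ᵐ ω ∂P, p (t + 1) ω = i → P[Y i | ℱ t] ω = P[Y i] := by
    let H := ⨆ j ∈ ({some i}ᶜ : Set (Option ι)), 𝒮 j
    have le_H {j : Option ι} (hj : j ≠ some i) : 𝒮 j ≤ H :=
      le_iSup₂_of_le (f := fun j (_ : j ∈ ({some i}ᶜ : Set (Option ι))) => 𝒮 j) j hj le_rfl
    have hp_i : MeasurableSet[ℱ t] (p (t + 1) ⁻¹' {i}) :=
      R.measurable_index t ht (measurableSet_singleton i)
    have trace : TraceLE (ℱ t) H (p (t + 1) ⁻¹' {i}) := by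
      have unrevealed : p (t + 1) ⁻¹' {i} ⊆ {ω | i ∉ I t ω} := by
        rintro ω rfl
        exact R.index_notMem t ht ω
      rw [← Set.inter_eq_left.2 unrevealed]
      refine (R.traceLE_notMem (le_H (j := none) (by simp)) (fun j hj => ?_) ht.le).inter_left hp_i
      exact measurable_iff_comap_le.2 (le_H (j := some j) (by simpa using hj))
    exact condExp_ae_eq_integral_on_of_traceLE (R.info_le h𝒢 hX ht.le) (iSup₂_le fun j _ => h𝒮 j)
      (h𝒮 (some i)) (indep_iSup_ne h𝒮 hindep (some i)) hp_i trace
      (hYX i).stronglyMeasurable (hY i)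
  filter_upwards [condExp_eval_ae_eq (R.measurable_index t ht) hY hYp,
    ae_all_iff.2 condExp_eq_on_fiber] with ω h_eval h_fiber
  exact h_eval.trans (h_fiber _ rfl)

end SequentialReveal

end SequentialReveal

section Betting

variable {Ω ι : Type*} {𝒢 m0 : MeasurableSpace Ω} {P : Measure Ω}

/-- The factor by which the wealth is multiplied when the fraction `w` of it is bet on an
observation `a` of mean `u`, at odds that make the bet fair. -/
noncomputable def betFactor (u w a : ℝ) : ℝ := 1 + w * (a / u - 1)

lemma betFactor_nonneg {u w a : ℝ} (hu : u ∈ Set.Ioo 0 1) (hw : w ∈ Set.Icc (-(u / (1 - u))) 1)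
    (ha : a = 0 ∨ a = 1) : 0 ≤ betFactor u w a := by
  obtain ⟨hu_pos, hu_lt⟩ := hu
  have : 0 < 1 - u := sub_pos.2 hu_lt
  rcases ha with rfl | rfl
  · simpa [betFactor] using hw.2
  · have lower : -(u / (1 - u)) * ((1 - u) / u) ≤ w * ((1 - u) / u) := by
      gcongr
      exact hw.1
    calc 0 = 1 + -(u / (1 - u)) * ((1 - u) / u) := by field_simp; ring
      _ ≤ 1 + w * ((1 - u) / u) := by gcongr
      _ = betFactor u w 1 := by rw [betFactor]; field_simp

lemma memLp_top_of_zero_or_one {f : Ω → ℝ} (hf : Measurable f) (h01 : ∀ ω, f ω = 0 ∨ f ω = 1) :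
    MemLp f ∞ P :=
  memLp_top_of_bound hf.aestronglyMeasurable 1
    (ae_of_all _ fun ω => by rcases h01 ω with h | h <;> simp [h])

lemma integral_eq_of_zero_or_one {f : Ω → ℝ} {u : ℝ} (hu : 0 ≤ u) (hf : Measurable f)
    (h01 : ∀ ω, f ω = 0 ∨ f ω = 1) (h1 : P {ω | f ω = 1} = ENNReal.ofReal u) : P[f] = u := by
  have h_meas : MeasurableSet {ω | f ω = 1} := hf (measurableSet_singleton 1)
  have f_eq_indicator : f = {ω | f ω = 1}.indicator 1 := by
    ext ω
    rcases h01 ω with h | h <;> simp [h]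
  rw [f_eq_indicator, integral_indicator_one h_meas, measureReal_def, h1,
    ENNReal.toReal_ofReal hu]

variable [Finite ι] [MeasurableSpace ι] [MeasurableSingletonClass ι]

lemma memLp_top_of_mem_Icc_eval {w : Ω → ℝ} {p : Ω → ι} {a b : ι → ℝ} (hw_meas : Measurable w)
    (hp : Measurable p) (hw : ∀ᵐ ω ∂P, w ω ∈ Set.Icc (a (p ω)) (b (p ω))) : MemLp w ∞ P := by
  have bound : MemLp (fun ω => max |a (p ω)| |b (p ω)|) ∞ P :=
    memLp_eval (X := fun i _ => max |a i| |b i|) hp fun _ => memLp_top_const _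
  refine bound.of_le hw_meas.aestronglyMeasurable (hw.mono fun ω hω => ?_)
  exact (abs_le_max_abs_abs hω.1 hω.2).trans (le_abs_self _)

lemma memLp_top_div_sub_one {f : Ω → ℝ} (hf : MemLp f ∞ P) (u : ℝ) :
    MemLp (fun ω => f ω / u - 1) ∞ P := by
  simp only [div_eq_mul_inv]
  exact (hf.mul_const u⁻¹).sub (memLp_top_const 1)

lemma memLp_top_betFactor_eval {w : Ω → ℝ} {p : Ω → ι} {μ : ι → ℝ}
    {X : ι → Ω → ℝ} (hw : MemLp w ∞ P) (hp : Measurable p) (hX : ∀ i, MemLp (X i) ∞ P) :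
    MemLp (fun ω => betFactor (μ (p ω)) (w ω) (X (p ω) ω)) ∞ P := by
  have h_return : MemLp (fun ω => X (p ω) ω / μ (p ω) - 1) ∞ P :=
    memLp_eval (X := fun i ω => X i ω / μ i - 1) hp fun i => memLp_top_div_sub_one (hX i) (μ i)
  have h_gain : MemLp (fun ω => w ω * (X (p ω) ω / μ (p ω) - 1)) ∞ P := h_return.mul' hw
  unfold betFactor
  exact (memLp_top_const (1 : ℝ)).add h_gain

namespace SequentialReveal

variable [DecidableEq ι] {X : ι → Ω → ℝ} {I₀ : Finset ι} {T t : ℕ}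
  {p : ℕ → Ω → ι} {I : ℕ → Ω → Finset ι} {ℱ : ℕ → MeasurableSpace Ω} {μ : ι → ℝ} {w : Ω → ℝ}

lemma measurable_betFactor (R : SequentialReveal 𝒢 X I₀ T p I ℱ) (ht : t < T)
    (hw : Measurable[ℱ t] w) :
    Measurable[ℱ (t + 1)] fun ω => betFactor (μ (p (t + 1) ω)) (w ω) (X (p (t + 1) ω) ω) := by
  have hw' : Measurable[ℱ (t + 1)] w := hw.mono (R.info_mono ht) le_rfl
  have hμ : Measurable[ℱ (t + 1)] fun ω => μ (p (t + 1) ω) :=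
    (measurable_of_countable μ).comp ((R.measurable_index t ht).mono (R.info_mono ht) le_rfl)
  exact (hw'.mul (((R.measurable_eval ht).div hμ).sub_const 1)).const_add 1

lemma condExp_betFactor [IsProbabilityMeasure P] (R : SequentialReveal 𝒢 X I₀ T p I ℱ)
    (h𝒢 : 𝒢 ≤ m0) (hX : ∀ i, Measurable (X i))
    (hindep : iIndep (fun j : Option ι =>
      j.elim 𝒢 fun i => MeasurableSpace.comap (X i) inferInstance) P)
    (hX_bdd : ∀ i, MemLp (X i) ∞ P) (hX_mean : ∀ i, P[X i] = μ i) (hμ : ∀ i, μ i ≠ 0)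
    (ht : t < T) (hw : Measurable[ℱ t] w) (hw_bdd : MemLp w ∞ P) :
    P[fun ω => betFactor (μ (p (t + 1) ω)) (w ω) (X (p (t + 1) ω) ω) | ℱ t] =ᵐ[P] 1 := by
  have hℱ := R.info_le h𝒢 hX ht.le
  let Z : ι → Ω → ℝ := fun i ω => X i ω / μ i - 1
  let Zp : Ω → ℝ := fun ω => Z (p (t + 1) ω) ω
  have hZ_bdd (i : ι) : MemLp (Z i) ∞ P := memLp_top_div_sub_one (hX_bdd i) (μ i)
  have hZp_bdd : MemLp Zp ∞ P := memLp_eval ((R.measurable_index t ht).mono hℱ le_rfl) hZ_bdd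
  have hZ_mean (i : ι) : P[Z i] = 0 := by
    rw [integral_sub (((hX_bdd i).integrable le_top).div_const _) (integrable_const 1),
      integral_div, hX_mean, div_self (hμ i)]
    simp
  have hZ_fair : P[Zp | ℱ t] =ᵐ[P] 0 := by
    filter_upwards [R.condExp_eval h𝒢 hX hindep
      (fun i => ((comap_measurable (X i)).div_const (μ i)).sub_const 1)
      (fun i => (hZ_bdd i).integrable le_top) ht (hZp_bdd.integrable le_top)] with ω h
    exact h.trans (hZ_mean _)
  have h_prod : Integrable (w * Zp) P := (hZp_bdd.mul hw_bdd : MemLp _ ∞ P).integrable le_top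
  filter_upwards [hZ_fair, condExp_add (integrable_const (1 : ℝ)) h_prod (ℱ t),
    condExp_mul_of_stronglyMeasurable_left hw.stronglyMeasurable h_prod
      (hZp_bdd.integrable le_top)] with ω h_fair h_add h_pull
  change P[(fun _ => 1) + w * Zp | ℱ t] ω = 1
  simp [h_add, h_pull, h_fair, condExp_const hℱ]

end SequentialReveal

end Betting

/-- **Type-I error control of the i-bet test.**
Under the global causal null (the treatment assignments `A i` are independent `{0,1}`-valued
random variables with `P(A i = 1) = μ i`, jointly independent of the σ-algebra `𝒢` of
outcomes and covariates), for every `α ∈ (0,1)` the i-bet test controls the type-I error: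
`P(∃ t ∈ {1,…,n − |I₀|}, M t ≥ 1/α) ≤ α`, regardless of how the predictable choices
`π t` and `w t` are made. -/
theorem ibet_type_one_error_control
    {Ω : Type*} {m0 : MeasurableSpace Ω} (P : Measure Ω) [IsProbabilityMeasure P]
    (n : ℕ) (μ : Fin n → ℝ) (hμ : ∀ i, μ i ∈ Set.Ioo (0:ℝ) 1)
    -- the treatment assignments
    (A : Fin n → Ω → ℝ) (hAmeas : ∀ i, Measurable (A i))
    (hA01 : ∀ i ω, A i ω = 0 ∨ A i ω = 1)
    (hA1 : ∀ i, P {ω | A i ω = 1} = ENNReal.ofReal (μ i))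
    -- the σ-algebra generated by all outcomes and covariates
    (𝒢 : MeasurableSpace Ω) (h𝒢 : 𝒢 ≤ m0)
    -- global causal null: the `A i` are mutually independent and the vector `(A 1, …, A n)`
    -- is independent of `𝒢`
    (hindep : iIndep (fun j : Option (Fin n) =>
        j.elim 𝒢 (fun i => MeasurableSpace.comap (A i) inferInstance)) P)
    -- the initially revealed holdout set
    (I₀ : Finset (Fin n))
    -- the interactively chosen ordering `π`, the revealed sets `I t`, and the filtration `ℱ`
    (π : ℕ → Ω → Fin n) (I : ℕ → Ω → Finset (Fin n)) (ℱ : ℕ → MeasurableSpace Ω)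
    (hI0 : ∀ ω, I 0 ω = I₀)
    (hIsucc : ∀ t, t + 1 ≤ n - I₀.card → ∀ ω, I (t+1) ω = insert (π (t+1) ω) (I t ω))
    (hℱ0 : ℱ 0 = 𝒢 ⊔ ⨆ i ∈ I₀, MeasurableSpace.comap (A i) inferInstance)
    (hℱsucc : ∀ t, t + 1 ≤ n - I₀.card → ℱ (t+1) = ℱ t ⊔
        MeasurableSpace.comap (fun ω => A (π (t+1) ω) ω) inferInstance)
    -- `π (t+1)` is `ℱ t`-measurable with values outside the already revealed set
    (hπmeas : ∀ t, t + 1 ≤ n - I₀.card → Measurable[ℱ t] (π (t+1)))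
    (hπnew : ∀ t, t + 1 ≤ n - I₀.card → ∀ ω, π (t+1) ω ∉ I t ω)
    -- the predictable bets
    (w : ℕ → Ω → ℝ)
    (hwmeas : ∀ t, t + 1 ≤ n - I₀.card → Measurable[ℱ t] (w (t+1)))
    (hw : ∀ t, t + 1 ≤ n - I₀.card → ∀ᵐ ω ∂P, w (t+1) ω ∈
        Set.Icc (-(μ (π (t+1) ω) / (1 - μ (π (t+1) ω)))) 1)
    -- the wealth process
    (M : ℕ → Ω → ℝ)
    (hM : ∀ t, t ≤ n - I₀.card → ∀ ω, M t ω = ∏ j ∈ Finset.range t,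
        (1 + w (j+1) ω * (A (π (j+1) ω) ω / μ (π (j+1) ω) - 1)))
    (α : ℝ) (hα : α ∈ Set.Ioo (0:ℝ) 1) :
    P {ω | ∃ t, 1 ≤ t ∧ t ≤ n - I₀.card ∧ 1/α ≤ M t ω} ≤ ENNReal.ofReal α := by
  have R : SequentialReveal 𝒢 A I₀ (n - I₀.card) π I ℱ :=
    ⟨hI0, hIsucc, hℱ0, hℱsucc, hπmeas, hπnew⟩
  let F : ℕ → Ω → ℝ := fun t ω =>
    betFactor (μ (π (t + 1) ω)) (w (t + 1) ω) (A (π (t + 1) ω) ω)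
  have hA_bdd (i : Fin n) : MemLp (A i) ∞ P := memLp_top_of_zero_or_one (hAmeas i) (hA01 i)
  have hA_mean (i : Fin n) : P[A i] = μ i :=
    integral_eq_of_zero_or_one (hμ i).1.le (hAmeas i) (hA01 i) (hA1 i)
  have hℱ {t : ℕ} (ht : t ≤ n - I₀.card) : ℱ t ≤ m0 := R.info_le h𝒢 hAmeas ht
  have hπ {t : ℕ} (ht : t < n - I₀.card) : Measurable[m0] (π (t + 1)) :=
    (hπmeas t ht).mono (hℱ ht.le) le_rfl
  have hw_bdd {t : ℕ} (ht : t < n - I₀.card) : MemLp (w (t + 1)) ∞ P :=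
    memLp_top_of_mem_Icc_eval (a := fun i => -(μ i / (1 - μ i))) (b := 1)
      ((hwmeas t ht).mono (hℱ ht.le) le_rfl) (hπ ht) (hw t ht)
  have crossing := measure_exists_prod_range_ge_le (F := F) (fun t => hℱ) (fun t => R.info_mono)
    (fun t ht => (R.measurable_betFactor ht (hwmeas t ht)).stronglyMeasurable)
    (fun t ht => memLp_top_betFactor_eval (hw_bdd ht) (hπ ht) hA_bdd)
    (fun t ht => (hw t ht).mono fun ω hω => betFactor_nonneg (hμ _) hω (hA01 _ ω))
    (fun t ht => R.condExp_betFactor h𝒢 hAmeas hindep hA_bdd hA_mean (fun i => (hμ i).1.ne') ht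
      (hwmeas t ht) (hw_bdd ht)) (one_div_pos.2 hα.1)
  refine (measure_mono ?_).trans (crossing.trans_eq (by rw [one_div_one_div]))
  rintro ω ⟨t, _, ht, hα_le⟩
  exact ⟨t, ht, hM t ht ω ▸ hα_le⟩
end

section
/- Under the global causal null, the type-I error control of the i-bet test holds conditionally on the outcomes and covariates: for every α ∈ (0,1), P(∃ t ∈ {1,…,n−|I_0|} : M_t ≥ 1/α | 𝒢) ≤ α almost surely. -/
open MeasureTheory ProbabilityTheory
open scoped ENNReal

/-!
On the event that the next revealed index is `i`, the index `i` has not been revealed before, so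
the past is a function of `𝒢` and the `A j` with `j ≠ i`, and hence is independent of `A i`. The
payoff of a bet on `A i` therefore has conditional mean zero given the past, and the wealth is a
nonnegative martingale; its integrability follows from nonnegativity, by cutting `Ω` into the
countably many pieces on which the index is constant and the stake is bounded. Optional sampling
at the first crossing of `1 / α` bounds the conditional crossing probability given `ℱ 0` by `α`,
and the tower property passes this bound down to `𝒢 ≤ ℱ 0`.
-/

section Measurability

variable {Ω ι β : Type*}

theorem measurableSet_inter_of_measurableSet_sup {m₁ m₂ m : MeasurableSpace Ω} {S : Set Ω}
    (hS : MeasurableSet[m] S) (h₁ : ∀ E, MeasurableSet[m₁] E → MeasurableSet[m] (E ∩ S))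
    (h₂ : ∀ E, MeasurableSet[m₂] E → MeasurableSet[m] (E ∩ S)) {E : Set Ω}
    (hE : MeasurableSet[m₁ ⊔ m₂] E) : MeasurableSet[m] (E ∩ S) := by
  have measurableSet_trace_iff (E : Set Ω) :
      MeasurableSet[(m.comap ((↑) : S → Ω)).map (↑)] E ↔ MeasurableSet[m] (E ∩ S) := by
    simpa only [MeasurableSpace.map_def, Subtype.range_coe] using
      (MeasurableEmbedding.subtype_coe hS).measurableSet_preimage (s := E)
  have hle : m₁ ⊔ m₂ ≤ (m.comap ((↑) : S → Ω)).map (↑) :=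
    sup_le (fun E hE => (measurableSet_trace_iff E).2 (h₁ E hE))
      fun E hE => (measurableSet_trace_iff E).2 (h₂ E hE)
  exact (measurableSet_trace_iff E).1 (hle E hE)

theorem measurable_apply_of_countable [Countable ι] [MeasurableSpace ι]
    [MeasurableSingletonClass ι] {_ : MeasurableSpace Ω} [MeasurableSpace β] {A : ι → Ω → β}
    (hA : ∀ i, Measurable (A i)) {p : Ω → ι} (hp : Measurable p) :
    Measurable fun ω => A (p ω) ω :=
  (measurable_from_prod_countable_right hA : Measurable fun q : ι × Ω => A q.1 q.2).comp
    (hp.prodMk measurable_id)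

end Measurability

theorem setOf_exists_le_congr {Ω T R : Type*} [LE T] [LE R] {f g : T → Ω → R} {k N : T} {c : R}
    (h : ∀ t ≤ N, f t = g t) :
    {ω | ∃ t, k ≤ t ∧ t ≤ N ∧ c ≤ f t ω} = {ω | ∃ t, k ≤ t ∧ t ≤ N ∧ c ≤ g t ω} := by
  ext ω
  exact exists_congr fun t => and_congr_right fun _ => and_congr_right fun ht => by rw [h t ht]

section Probability

variable {Ω ι κ : Type*} {m m₀ : MeasurableSpace Ω} {P : Measure Ω}

theorem indep_iSup_ne_s1 {s : ι → MeasurableSpace Ω} (hle : ∀ i, s i ≤ m₀) (hs : iIndep s P) (i : ι) :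
    Indep (⨆ j ≠ i, s j) (s i) P := by
  simpa using indep_iSup_of_disjoint hle hs (S := {j | j ≠ i}) (T := {i}) (by simp)

theorem condExp_indicator_exists_le_le [IsFiniteMeasure P] {ℱ : Filtration ℕ m₀} {f : ℕ → Ω → ℝ}
    (hf : Martingale f ℱ P) (hnonneg : ∀ t, 0 ≤ᵐ[P] f t) {c : ℝ} (hc : 0 < c) (k N : ℕ) :
    P[{ω | ∃ t, k ≤ t ∧ t ≤ N ∧ c ≤ f t ω}.indicator (fun _ => (1 : ℝ)) | ℱ 0]
      ≤ᵐ[P] c⁻¹ • f 0 := by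
  set crossing : Set Ω := {ω | ∃ t, k ≤ t ∧ t ≤ N ∧ c ≤ f t ω}
  have hfmeas : Adapted ℱ f := fun t => (hf.1 t).measurable
  have hcrossing : MeasurableSet crossing := by
    have hf' (t : ℕ) : Measurable (f t) := (hfmeas t).mono (ℱ.le t) le_rfl
    measurability
  let τ : Ω → WithTop ℕ := fun ω => (hittingBtwn f (Set.Ici c) k N ω : ℕ)
  have hτ : IsStoppingTime ℱ τ := hfmeas.isStoppingTime_hittingBtwn measurableSet_Ici
  have hτN (ω : Ω) : τ ω ≤ N := WithTop.coe_le_coe.2 (hittingBtwn_le ω)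
  have hsampling : f 0 =ᵐ[P] P[stoppedValue f τ | ℱ 0] := by
    have := hf.stoppedValue_ae_eq_condExp_of_le hτ (isStoppingTime_const ℱ 0)
      (fun ω => zero_le) hτN
    rwa [IsStoppingTime.measurableSpace_const, stoppedValue_const] at this
  have hle : crossing.indicator (fun _ => (1 : ℝ)) ≤ᵐ[P] c⁻¹ • stoppedValue f τ := by
    filter_upwards [ae_all_iff.2 hnonneg] with ω hω
    by_cases hmem : ω ∈ crossing
    · obtain ⟨t, hkt, htN, hct⟩ := id hmem
      have : c ≤ stoppedValue f τ ω := stoppedValue_hittingBtwn_mem ⟨t, ⟨hkt, htN⟩, hct⟩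
      simpa [hmem, inv_mul_eq_div, one_le_div hc] using this
    · rw [Set.indicator_of_notMem hmem]
      exact mul_nonneg (inv_nonneg.2 hc.le) (hω _)
  have hint : Integrable (stoppedValue f τ) P := integrable_stoppedValue ℕ hτ hf.integrable hτN
  calc P[crossing.indicator (fun _ => (1 : ℝ)) | ℱ 0]
      ≤ᵐ[P] P[c⁻¹ • stoppedValue f τ | ℱ 0] :=
        condExp_mono ((integrable_const 1).indicator hcrossing) (hint.smul _) hle
    _ =ᵐ[P] c⁻¹ • P[stoppedValue f τ | ℱ 0] := condExp_smul _ _ _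
    _ =ᵐ[P] c⁻¹ • f 0 := hsampling.symm.const_smul _

theorem integrable_and_condExp_eq_of_forall_fiber [Countable κ] [MeasurableSpace κ]
    [MeasurableSingletonClass κ] (hm : m ≤ m₀) [SigmaFinite (P.trim hm)] {q : Ω → κ}
    (hq : Measurable[m] q) {X Y : Ω → ℝ} (hX : StronglyMeasurable[m] X) (hXint : Integrable X P)
    (hY : 0 ≤ᵐ[P] Y) (hYint : ∀ k, IntegrableOn Y (q ⁻¹' {k}) P)
    (hYX : ∀ k, ∀ E, MeasurableSet[m] E → E ⊆ q ⁻¹' {k} → ∫ ω in E, Y ω ∂P = ∫ ω in E, X ω ∂P) :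
    Integrable Y P ∧ P[Y | m] =ᵐ[P] X := by
  have hfiber (k : κ) : MeasurableSet[m] (q ⁻¹' {k}) := hq (measurableSet_singleton k)
  have hcover (E : Set Ω) : E = ⋃ k, E ∩ q ⁻¹' {k} := by ext; simp
  have hdisjoint (E : Set Ω) : Pairwise (Function.onFun Disjoint fun k => E ∩ q ⁻¹' {k}) :=
    fun k l hkl => ((Set.disjoint_singleton.2 hkl).preimage q).mono
      Set.inter_subset_right Set.inter_subset_right
  have hYintegrable : Integrable Y P := by
    have hnorm (k : κ) : ∫ ω in q ⁻¹' {k}, ‖Y ω‖ ∂P = ∫ ω in q ⁻¹' {k}, X ω ∂P := by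
      rw [← hYX k _ (hfiber k) subset_rfl]
      refine integral_congr_ae (ae_restrict_of_ae ?_)
      filter_upwards [hY] with ω hω using Real.norm_of_nonneg hω
    have hsum : Summable fun k => ∫ ω in q ⁻¹' {k}, ‖Y ω‖ ∂P := by
      simp only [hnorm]
      simpa only [Set.univ_inter] using (hasSum_integral_iUnion
        (fun k => (MeasurableSet.univ.inter (hm _ (hfiber k)))) (hdisjoint Set.univ)
        hXint.integrableOn).summable
    rw [← integrableOn_univ, hcover Set.univ]
    simpa only [Set.univ_inter] using integrableOn_iUnion_of_summable_integral_norm hYint hsum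
  refine ⟨hYintegrable, (ae_eq_condExp_of_forall_setIntegral_eq hm hYintegrable
    (fun _ _ _ => hXint.integrableOn) (fun E hE _ => ?_) hX.aestronglyMeasurable).symm⟩
  have hEmeas (k : κ) : MeasurableSet[m] (E ∩ q ⁻¹' {k}) := hE.inter (hfiber k)
  rw [hcover E, integral_iUnion (fun k => hm _ (hEmeas k)) (hdisjoint E) hXint.integrableOn,
    integral_iUnion (fun k => hm _ (hEmeas k)) (hdisjoint E) hYintegrable.integrableOn]
  exact tsum_congr fun k => (hYX k _ (hEmeas k) Set.inter_subset_right).symm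

theorem integrableOn_mul_and_setIntegral_mul_eq_zero {s : MeasurableSpace Ω} (hs : s ≤ m₀)
    {Z : Ω → ℝ} (hZint : Integrable Z P) (hZmean : P[Z] = 0)
    (hindep : Indep s (MeasurableSpace.comap Z inferInstance) P) {E : Set Ω}
    (hE : MeasurableSet[m] E) (hle : ∀ F, MeasurableSet[m] F → F ⊆ E → MeasurableSet[s] F)
    {g : Ω → ℝ} (hg : StronglyMeasurable[m] g) (hgint : IntegrableOn g E P) :
    IntegrableOn (fun ω => g ω * Z ω) E P ∧ ∫ ω in E, g ω * Z ω ∂P = 0 := by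
  have hE₀ : MeasurableSet[m₀] E := hs _ (hle E hE subset_rfl)
  have hgs : StronglyMeasurable[s] (E.indicator g) :=
    (hg.indicator hE).stronglyMeasurable_of_measurableSpace_le_on hE
      (fun F hF => hle _ hF Set.inter_subset_left) fun ω hω => Set.indicator_of_notMem hω g
  have hgint' : Integrable (E.indicator g) P := hgint.integrable_indicator hE₀
  have hgZ : E.indicator g ⟂ᵢ[P] Z :=
    (IndepFun_iff_Indep _ _ _).2 (indep_of_indep_of_le_left hindep hgs.measurable.comap_le)
  have hmul : E.indicator (fun ω => g ω * Z ω) = E.indicator g * Z :=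
    funext fun ω => Set.indicator_mul_left E g Z
  rw [← integrable_indicator_iff hE₀, ← integral_indicator hE₀, hmul]
  refine ⟨hgZ.integrable_mul hgint' hZint, ?_⟩
  rw [hgZ.integral_mul_eq_mul_integral hgint'.1 hZint.1, hZmean, mul_zero]

theorem integrable_and_condExp_add_mul_selected_eq [IsFiniteMeasure P] [Countable ι]
    [MeasurableSpace ι] [MeasurableSingletonClass ι] (hm : m ≤ m₀) {p : Ω → ι}
    (hp : Measurable[m] p) {s : ι → MeasurableSpace Ω} (hs : ∀ i, s i ≤ m₀)
    (hle : ∀ i E, MeasurableSet[m] E → E ⊆ p ⁻¹' {i} → MeasurableSet[s i] E)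
    {Z : ι → Ω → ℝ} (hZint : ∀ i, Integrable (Z i) P) (hZmean : ∀ i, P[Z i] = 0)
    (hindep : ∀ i, Indep (s i) (MeasurableSpace.comap (Z i) inferInstance) P) {X g : Ω → ℝ}
    (hX : StronglyMeasurable[m] X) (hXint : Integrable X P) (hg : StronglyMeasurable[m] g)
    (hnonneg : ∀ᵐ ω ∂P, 0 ≤ X ω + g ω * Z (p ω) ω) :
    Integrable (fun ω => X ω + g ω * Z (p ω) ω) P ∧
      P[fun ω => X ω + g ω * Z (p ω) ω | m] =ᵐ[P] X := by
  let q : Ω → ι × ℕ := fun ω => (p ω, ⌊‖g ω‖⌋₊)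
  have hq : Measurable[m] q := hp.prodMk (Nat.measurable_floor.comp hg.norm.measurable)
  have hfiber (k : ι × ℕ) (E : Set Ω) (hE : MeasurableSet[m] E) (hEk : E ⊆ q ⁻¹' {k}) :
      IntegrableOn (fun ω => g ω * Z (p ω) ω) E P ∧ ∫ ω in E, g ω * Z (p ω) ω ∂P = 0 := by
    have hpk : E ⊆ p ⁻¹' {k.1} := fun ω hω => congrArg Prod.fst (hEk hω)
    have hgk (ω : Ω) (hω : ω ∈ E) : ‖g ω‖ ≤ k.2 + 1 :=
      congrArg Prod.snd (hEk hω) ▸ (Nat.lt_floor_add_one ‖g ω‖).le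
    have hgint : IntegrableOn g E P :=
      .of_bound (measure_lt_top P E) (hg.mono hm).aestronglyMeasurable _
        (ae_restrict_of_forall_mem (hm _ hE) hgk)
    have hcongr : Set.EqOn (fun ω => g ω * Z (p ω) ω) (fun ω => g ω * Z k.1 ω) E :=
      fun ω hω => by simp only [show p ω = k.1 from hpk hω]
    rw [integrableOn_congr_fun hcongr (hm _ hE), setIntegral_congr_fun (hm _ hE) hcongr]
    exact integrableOn_mul_and_setIntegral_mul_eq_zero (hs k.1) (hZint k.1) (hZmean k.1)
      (hindep k.1) hE (fun F hF hFE => hle _ F hF (hFE.trans hpk)) hg hgint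
  refine integrable_and_condExp_eq_of_forall_fiber hm hq hX hXint hnonneg (fun k => ?_)
    fun k E hE hEk => ?_
  · exact hXint.integrableOn.add (hfiber k _ (hq (measurableSet_singleton k)) subset_rfl).1
  · obtain ⟨hint, hzero⟩ := hfiber k E hE hEk
    rw [integral_add hXint.integrableOn hint, hzero, add_zero]

end Probability

theorem one_add_mul_div_sub_one_nonneg {μ a w : ℝ} (hμ : μ ∈ Set.Ioo (0 : ℝ) 1)
    (ha : a ∈ Set.Icc (0 : ℝ) 1) (hw : w ∈ Set.Icc (-(μ / (1 - μ))) 1) :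
    0 ≤ 1 + w * (a / μ - 1) := by
  have hμ' : 0 < 1 - μ := sub_pos.2 hμ.2
  have hat_zero : 0 ≤ 1 - w := sub_nonneg.2 hw.2
  have hat_one : 0 ≤ 1 + w * ((1 - μ) / μ) := by
    have hμ0 := hμ.1.ne'
    calc 0 = 1 + -(μ / (1 - μ)) * ((1 - μ) / μ) := by field_simp; ring
      _ ≤ 1 + w * ((1 - μ) / μ) := by have := hμ.1; gcongr; exact hw.1
  calc 0 ≤ (1 - a) * (1 - w) + a * (1 + w * ((1 - μ) / μ)) :=
        add_nonneg (mul_nonneg (sub_nonneg.2 ha.2) hat_zero) (mul_nonneg ha.1 hat_one)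
    _ = 1 + w * (a / μ - 1) := by have := hμ.1.ne'; field_simp; ring

theorem integrable_and_integral_div_sub_one_eq_zero {Ω : Type*} {m₀ : MeasurableSpace Ω}
    {P : Measure Ω} [IsProbabilityMeasure P] {A : Ω → ℝ} (hA : Measurable A)
    (hA01 : ∀ ω, A ω = 0 ∨ A ω = 1) {μ : ℝ} (hμ : 0 < μ)
    (hA1 : P {ω | A ω = 1} = ENNReal.ofReal μ) :
    Integrable (fun ω => A ω / μ - 1) P ∧ ∫ ω, (A ω / μ - 1) ∂P = 0 := by
  have hone : MeasurableSet {ω | A ω = 1} := hA (measurableSet_singleton 1)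
  have hAeq : A = {ω | A ω = 1}.indicator 1 := by
    ext ω
    rcases hA01 ω with h | h <;> simp [h]
  have hint : Integrable A P := hAeq ▸ (integrable_const 1).indicator hone
  have hmean : ∫ ω, A ω ∂P = μ := by
    rw [hAeq, integral_indicator_one hone, measureReal_def, hA1, ENNReal.toReal_ofReal hμ.le]
  refine ⟨(hint.div_const μ).sub (integrable_const 1), ?_⟩
  rw [integral_sub (hint.div_const μ) (integrable_const 1), integral_div, hmean, div_self hμ.ne']
  simp

/-- Interactive revelation, over the rounds `1, …, N`, of a family `A` of hidden variables. Starting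
from the information `𝒢` and the holdout `I₀`, round `t + 1` picks an index `π (t + 1)` outside the
revealed set `I t` on the basis of the information `ℱ t`, and reveals `A` at that index. Nothing is
required of `π`, `I` and `ℱ` beyond round `N`, when the indices may have run out. -/
structure IsInteractiveReveal {Ω ι β : Type*} [MeasurableSpace ι] [MeasurableSpace β]
    (𝒢 : MeasurableSpace Ω) (A : ι → Ω → β) (I₀ : Set ι) (N : ℕ) (π : ℕ → Ω → ι)
    (I : ℕ → Ω → Set ι) (ℱ : ℕ → MeasurableSpace Ω) : Prop where
  revealed_zero : ∀ ω, I 0 ω = I₀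
  revealed_succ : ∀ t < N, ∀ ω, I (t + 1) ω = insert (π (t + 1) ω) (I t ω)
  info_zero : ℱ 0 = 𝒢 ⊔ ⨆ i ∈ I₀, MeasurableSpace.comap (A i) inferInstance
  info_succ : ∀ t < N, ℱ (t + 1) =
    ℱ t ⊔ MeasurableSpace.comap (fun ω => A (π (t + 1) ω) ω) inferInstance
  measurable_choice : ∀ t < N, Measurable[ℱ t] (π (t + 1))
  choice_notMem : ∀ t < N, ∀ ω, π (t + 1) ω ∉ I t ω

/-- The wealth after `t` rounds, started from `1`, of a gambler who in round `j` stakes the fraction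
`w j` of the current wealth on the payoff `z i (A i)` of the index `i = π j`. Rounds are numbered
from `1`. -/
def wealth {Ω ι β : Type*} (z : ι → β → ℝ) (A : ι → Ω → β) (π : ℕ → Ω → ι) (w : ℕ → Ω → ℝ)
    (t : ℕ) (ω : Ω) : ℝ :=
  ∏ j ∈ Finset.range t, (1 + w (j + 1) ω * z (π (j + 1) ω) (A (π (j + 1) ω) ω))

section Wealth

variable {Ω ι β : Type*} {z : ι → β → ℝ} {A : ι → Ω → β} {π : ℕ → Ω → ι} {w : ℕ → Ω → ℝ}

@[simp]
theorem wealth_zero : wealth z A π w 0 = 1 := rfl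

theorem wealth_succ (t : ℕ) : wealth z A π w (t + 1) = fun ω =>
    wealth z A π w t ω * (1 + w (t + 1) ω * z (π (t + 1) ω) (A (π (t + 1) ω) ω)) :=
  funext fun _ => Finset.prod_range_succ _ _

theorem wealth_nonneg {m₀ : MeasurableSpace Ω} {P : Measure Ω} {N : ℕ}
    (hfactor : ∀ t < N, ∀ᵐ ω ∂P,
      0 ≤ 1 + w (t + 1) ω * z (π (t + 1) ω) (A (π (t + 1) ω) ω)) (t : ℕ) (ht : t ≤ N) :
    0 ≤ᵐ[P] wealth z A π w t := by
  have hall : ∀ᵐ ω ∂P, ∀ j < t, 0 ≤ 1 + w (j + 1) ω * z (π (j + 1) ω) (A (π (j + 1) ω) ω) :=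
    ae_all_iff.2 fun j => Filter.eventually_all.2 fun hj => hfactor j (hj.trans_le ht)
  filter_upwards [hall] with ω hω
  exact Finset.prod_nonneg fun j hj => hω j (Finset.mem_range.1 hj)

end Wealth

namespace IsInteractiveReveal

variable {Ω ι β : Type*} [MeasurableSpace ι] [MeasurableSpace β] {m₀ 𝒢 : MeasurableSpace Ω}
  {A : ι → Ω → β} {I₀ : Set ι} {N : ℕ} {π : ℕ → Ω → ι} {I : ℕ → Ω → Set ι}
  {ℱ : ℕ → MeasurableSpace Ω}

theorem info_le_info_succ (h : IsInteractiveReveal 𝒢 A I₀ N π I ℱ) {t : ℕ} (ht : t < N) :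
    ℱ t ≤ ℱ (t + 1) :=
  h.info_succ t ht ▸ le_sup_left

theorem base_le_info_zero (h : IsInteractiveReveal 𝒢 A I₀ N π I ℱ) : 𝒢 ≤ ℱ 0 :=
  h.info_zero ▸ le_sup_left

variable [Countable ι] [MeasurableSingletonClass ι]

theorem info_le (h : IsInteractiveReveal 𝒢 A I₀ N π I ℱ) (h𝒢 : 𝒢 ≤ m₀)
    (hA : ∀ i, Measurable[m₀] (A i)) : ∀ t ≤ N, ℱ t ≤ m₀ := by
  intro t
  induction t with
  | zero => exact fun _ => h.info_zero ▸ sup_le h𝒢 (iSup₂_le fun i _ => (hA i).comap_le)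
  | succ t ih =>
    intro ht
    have hle : ℱ t ≤ m₀ := ih (Nat.le_of_succ_le ht)
    have hπ : Measurable[m₀] (π (t + 1)) := (h.measurable_choice t ht).mono hle le_rfl
    exact h.info_succ t ht ▸ sup_le hle (measurable_apply_of_countable hA hπ).comap_le

/-- The information filtration of an interactive revelation, frozen after the last round. -/
def filtration (h : IsInteractiveReveal 𝒢 A I₀ N π I ℱ) (h𝒢 : 𝒢 ≤ m₀)
    (hA : ∀ i, Measurable[m₀] (A i)) : Filtration ℕ m₀ where
  seq t := ℱ (min t N)
  mono' := monotone_nat_of_le_succ fun t => by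
    rcases lt_or_ge t N with ht | ht
    · rw [min_eq_left ht.le, min_eq_left ht]
      exact h.info_le_info_succ ht
    · rw [min_eq_right ht, min_eq_right (Nat.le_succ_of_le ht)]
  le' t := h.info_le h𝒢 hA _ (min_le_right t N)

theorem measurableSet_inter_notMem (h : IsInteractiveReveal 𝒢 A I₀ N π I ℱ)
    {s : MeasurableSpace Ω} {i : ι} (h𝒢 : 𝒢 ≤ s) (hA : ∀ j ≠ i, Measurable[s] (A j)) :
    ∀ t ≤ N, ∀ E, MeasurableSet[ℱ t] E → MeasurableSet[s] (E ∩ {ω | i ∉ I t ω}) := by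
  intro t
  induction t with
  | zero =>
    intro _ E hE
    by_cases hi : i ∈ I₀
    · simp [h.revealed_zero, hi]
    · have hle : ℱ 0 ≤ s := h.info_zero ▸
        sup_le h𝒢 (iSup₂_le fun j hj => (hA j (ne_of_mem_of_not_mem hj hi)).comap_le)
      simpa [h.revealed_zero, hi] using hle E hE
  | succ t ih =>
    intro ht E hE
    replace ih := ih (Nat.le_of_succ_le ht)
    have hπ (J : Set ι) : MeasurableSet[ℱ t] (π (t + 1) ⁻¹' J) :=
      h.measurable_choice t ht J.to_countable.measurableSet
    have hsucc : {ω | i ∉ I (t + 1) ω} = π (t + 1) ⁻¹' {i}ᶜ ∩ {ω | i ∉ I t ω} := by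
      ext ω; simp [h.revealed_succ t ht, eq_comm]
    rw [h.info_succ t ht] at hE
    refine measurableSet_inter_of_measurableSet_sup (hsucc ▸ ih _ (hπ _)) (fun F hF => ?_) ?_ hE
    · rw [hsucc, ← Set.inter_assoc]
      exact ih _ (hF.inter (hπ _))
    · rintro _ ⟨B, hB, rfl⟩
      have hunion : (fun ω => A (π (t + 1) ω) ω) ⁻¹' B ∩ {ω | i ∉ I (t + 1) ω} =
          ⋃ j : {j // j ≠ i}, A j ⁻¹' B ∩ (π (t + 1) ⁻¹' {j.1} ∩ {ω | i ∉ I t ω}) := by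
        rw [hsucc]
        ext ω
        simp [and_left_comm]
      rw [hunion]
      exact .iUnion fun j => (hA j j.2 hB).inter (ih _ (hπ _))

theorem measurableSet_of_subset_choice (h : IsInteractiveReveal 𝒢 A I₀ N π I ℱ)
    {s : MeasurableSpace Ω} {i : ι} (h𝒢 : 𝒢 ≤ s) (hA : ∀ j ≠ i, Measurable[s] (A j)) {t : ℕ}
    (ht : t < N) {E : Set Ω} (hE : MeasurableSet[ℱ t] E) (hEi : E ⊆ π (t + 1) ⁻¹' {i}) :
    MeasurableSet[s] E := by
  have hunrevealed : E ⊆ {ω | i ∉ I t ω} := fun ω hω => hEi hω ▸ h.choice_notMem t ht ω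
  rw [← Set.inter_eq_left.2 hunrevealed]
  exact h.measurableSet_inter_notMem h𝒢 hA t ht.le E hE

variable {P : Measure[m₀] Ω} {z : ι → β → ℝ} {w : ℕ → Ω → ℝ}

theorem integrable_and_condExp_add_mul_payoff_eq [IsFiniteMeasure P]
    (h : IsInteractiveReveal 𝒢 A I₀ N π I ℱ) (h𝒢 : 𝒢 ≤ m₀) (hA : ∀ i, Measurable[m₀] (A i))
    (hindep : iIndep (fun j : Option ι =>
      j.elim 𝒢 fun i => MeasurableSpace.comap (A i) inferInstance) P)
    (hz : ∀ i, Measurable (z i)) (hzint : ∀ i, Integrable (fun ω => z i (A i ω)) P)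
    (hzmean : ∀ i, ∫ ω, z i (A i ω) ∂P = 0) {t : ℕ} (ht : t < N) {X g : Ω → ℝ}
    (hX : StronglyMeasurable[ℱ t] X) (hXint : Integrable X P) (hg : StronglyMeasurable[ℱ t] g)
    (hnonneg : ∀ᵐ ω ∂P, 0 ≤ X ω + g ω * z (π (t + 1) ω) (A (π (t + 1) ω) ω)) :
    Integrable (fun ω => X ω + g ω * z (π (t + 1) ω) (A (π (t + 1) ω) ω)) P ∧
      P[fun ω => X ω + g ω * z (π (t + 1) ω) (A (π (t + 1) ω) ω) | ℱ t] =ᵐ[P] X := by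
  let source : Option ι → MeasurableSpace Ω := fun j =>
    j.elim 𝒢 fun i => MeasurableSpace.comap (A i) inferInstance
  have hsource : ∀ j, source j ≤ m₀ := Option.forall.2 ⟨h𝒢, fun i => (hA i).comap_le⟩
  have hle_others {j : Option ι} {i : ι} (hj : j ≠ some i) : source j ≤ ⨆ k ≠ some i, source k :=
    le_iSup₂_of_le j hj le_rfl
  have hA_others (i j : ι) (hj : j ≠ i) : Measurable[⨆ k ≠ some i, source k] (A j) :=
    measurable_iff_comap_le.2 (hle_others (j := some j) (by simpa using hj))
  have hz_le (i : ι) : MeasurableSpace.comap (fun ω => z i (A i ω)) inferInstance ≤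
      source (some i) :=
    ((hz i).comp (comap_measurable (A i))).comap_le
  exact integrable_and_condExp_add_mul_selected_eq (Z := fun i ω => z i (A i ω))
    (h.info_le h𝒢 hA t ht.le) (h.measurable_choice t ht) (fun i => iSup₂_le fun j _ => hsource j)
    (fun i E hE hEi => h.measurableSet_of_subset_choice (hle_others (j := none) (by simp))
      (hA_others i) ht hE hEi)
    hzint hzmean
    (fun i => indep_of_indep_of_le_right (indep_iSup_ne_s1 hsource hindep (some i)) (hz_le i))
    hX hXint hg hnonneg

theorem measurable_wealth (h : IsInteractiveReveal 𝒢 A I₀ N π I ℱ) (hz : ∀ i, Measurable (z i))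
    (hw : ∀ t < N, Measurable[ℱ t] (w (t + 1))) :
    ∀ t ≤ N, Measurable[ℱ t] (wealth z A π w t) := by
  intro t
  induction t with
  | zero => exact fun _ => measurable_const
  | succ t ih =>
    intro ht
    have hle : ℱ t ≤ ℱ (t + 1) := h.info_le_info_succ ht
    have hA : Measurable[ℱ (t + 1)] fun ω => A (π (t + 1) ω) ω :=
      measurable_iff_comap_le.2 (h.info_succ t ht ▸ le_sup_right)
    have hπ : Measurable[ℱ (t + 1)] (π (t + 1)) := (h.measurable_choice t ht).mono hle le_rfl
    have hpayoff : Measurable[ℱ (t + 1)] fun ω => z (π (t + 1) ω) (A (π (t + 1) ω) ω) :=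
      measurable_apply_of_countable (fun i => (hz i).comp hA) hπ
    have hwealth : Measurable[ℱ (t + 1)] (wealth z A π w t) :=
      (ih (Nat.le_of_succ_le ht)).mono hle le_rfl
    simp only [wealth_succ]
    exact hwealth.mul ((((hw t ht).mono hle le_rfl).mul hpayoff).const_add 1)

theorem martingale_wealth [IsFiniteMeasure P]
    (h : IsInteractiveReveal 𝒢 A I₀ N π I ℱ) (h𝒢 : 𝒢 ≤ m₀) (hA : ∀ i, Measurable[m₀] (A i))
    (hindep : iIndep (fun j : Option ι =>
      j.elim 𝒢 fun i => MeasurableSpace.comap (A i) inferInstance) P)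
    (hz : ∀ i, Measurable (z i)) (hzint : ∀ i, Integrable (fun ω => z i (A i ω)) P)
    (hzmean : ∀ i, ∫ ω, z i (A i ω) ∂P = 0)
    (hw : ∀ t < N, Measurable[ℱ t] (w (t + 1)))
    (hfactor : ∀ t < N, ∀ᵐ ω ∂P,
      0 ≤ 1 + w (t + 1) ω * z (π (t + 1) ω) (A (π (t + 1) ω) ω)) :
    Martingale (fun t => wealth z A π w (min t N)) (h.filtration h𝒢 hA) P := by
  have hmeas := h.measurable_wealth hz hw
  have hstep (t : ℕ) (ht : t < N) (hint : Integrable (wealth z A π w t) P) :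
      Integrable (wealth z A π w (t + 1)) P ∧
        P[wealth z A π w (t + 1) | ℱ t] =ᵐ[P] wealth z A π w t := by
    have hsucc : wealth z A π w (t + 1) = fun ω => wealth z A π w t ω +
        (wealth z A π w t ω * w (t + 1) ω) * z (π (t + 1) ω) (A (π (t + 1) ω) ω) := by
      ext ω; rw [wealth_succ]; ring
    rw [hsucc]
    refine h.integrable_and_condExp_add_mul_payoff_eq h𝒢 hA hindep hz hzint hzmean ht
      (hmeas t ht.le).stronglyMeasurable hint
      ((hmeas t ht.le).mul (hw t ht)).stronglyMeasurable ?_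
    filter_upwards [wealth_nonneg hfactor (t + 1) ht] with ω hω
    exact hω.trans_eq (congrFun hsucc ω)
  have hint : ∀ t ≤ N, Integrable (wealth z A π w t) P := by
    intro t
    induction t with
    | zero => exact fun _ => integrable_const 1
    | succ t ih => exact fun ht => (hstep t ht (ih (Nat.le_of_succ_le ht))).1
  refine martingale_nat (fun t => (hmeas _ (min_le_right t N)).stronglyMeasurable)
    (fun t => hint _ (min_le_right t N)) fun t => ?_
  change _ =ᵐ[P] P[_ | ℱ (min t N)]
  rcases lt_or_ge t N with ht | ht
  · rw [min_eq_left ht.le, min_eq_left ht]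
    exact (hstep t ht (hint t ht.le)).2.symm
  · rw [min_eq_right ht, min_eq_right (Nat.le_succ_of_le ht),
      condExp_of_stronglyMeasurable (h.info_le h𝒢 hA N le_rfl) (hmeas N le_rfl).stronglyMeasurable
        (hint N le_rfl)]

end IsInteractiveReveal

theorem ibet_conditional_type_one_error_control_general {Ω ι β : Type*} [Countable ι]
    [MeasurableSpace ι] [MeasurableSingletonClass ι] [MeasurableSpace β] {m₀ : MeasurableSpace Ω}
    {P : Measure Ω} [IsProbabilityMeasure P] {A : ι → Ω → β} (hA : ∀ i, Measurable (A i))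
    {𝒢 : MeasurableSpace Ω} (h𝒢 : 𝒢 ≤ m₀)
    (hindep : iIndep (fun j : Option ι =>
      j.elim 𝒢 fun i => MeasurableSpace.comap (A i) inferInstance) P)
    {z : ι → β → ℝ} (hz : ∀ i, Measurable (z i))
    (hzint : ∀ i, Integrable (fun ω => z i (A i ω)) P) (hzmean : ∀ i, ∫ ω, z i (A i ω) ∂P = 0)
    {I₀ : Set ι} {N : ℕ} {π : ℕ → Ω → ι} {I : ℕ → Ω → Set ι} {ℱ : ℕ → MeasurableSpace Ω}
    (h : IsInteractiveReveal 𝒢 A I₀ N π I ℱ) {w : ℕ → Ω → ℝ}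
    (hw : ∀ t < N, Measurable[ℱ t] (w (t + 1)))
    (hfactor : ∀ t < N, ∀ᵐ ω ∂P,
      0 ≤ 1 + w (t + 1) ω * z (π (t + 1) ω) (A (π (t + 1) ω) ω))
    {α : ℝ} (hα : 0 < α) :
    P[{ω | ∃ t, 1 ≤ t ∧ t ≤ N ∧ 1 / α ≤ wealth z A π w t ω}.indicator (fun _ => (1 : ℝ)) | 𝒢]
      ≤ᵐ[P] fun _ => α := by
  let M : ℕ → Ω → ℝ := fun t => wealth z A π w (min t N)
  have hmartingale : Martingale M (h.filtration h𝒢 hA) P :=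
    h.martingale_wealth h𝒢 hA hindep hz hzint hzmean hw hfactor
  have hMwealth (t : ℕ) (ht : t ≤ N) : wealth z A π w t = M t := by simp only [M, min_eq_left ht]
  set crossing : Ω → ℝ := {ω | ∃ t, 1 ≤ t ∧ t ≤ N ∧ 1 / α ≤ M t ω}.indicator fun _ => 1
  have hville : P[crossing | ℱ 0] ≤ᵐ[P] fun _ => α := by
    have hinit : (1 / α)⁻¹ • M 0 = fun _ => α := by ext; simp [M]
    rw [← hinit, ← Nat.zero_min N]
    exact condExp_indicator_exists_le_le hmartingale
      (fun t => wealth_nonneg hfactor _ (min_le_right t N)) (one_div_pos.2 hα) 1 N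
  rw [setOf_exists_le_congr hMwealth]
  calc P[crossing | 𝒢]
      =ᵐ[P] P[P[crossing | ℱ 0] | 𝒢] :=
        (condExp_condExp_of_le h.base_le_info_zero (h.info_le h𝒢 hA 0 N.zero_le)).symm
    _ ≤ᵐ[P] P[fun _ => α | 𝒢] := condExp_mono integrable_condExp (integrable_const α) hville
    _ = fun _ => α := condExp_const h𝒢 α

/-- **Conditional type-I error control of the i-bet test.**
Under the global causal null, the type-I error control of the i-bet test holds conditionally
on the outcomes and covariates: for every `α ∈ (0,1)`,
`P(∃ t ∈ {1,…,n − |I₀|}, M t ≥ 1/α | 𝒢) ≤ α` almost surely. -/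
theorem ibet_conditional_type_one_error_control
    {Ω : Type*} {m0 : MeasurableSpace Ω} (P : Measure Ω) [IsProbabilityMeasure P]
    (n : ℕ) (μ : Fin n → ℝ) (hμ : ∀ i, μ i ∈ Set.Ioo (0:ℝ) 1)
    -- the treatment assignments
    (A : Fin n → Ω → ℝ) (hAmeas : ∀ i, Measurable (A i))
    (hA01 : ∀ i ω, A i ω = 0 ∨ A i ω = 1)
    (hA1 : ∀ i, P {ω | A i ω = 1} = ENNReal.ofReal (μ i))
    -- the σ-algebra generated by all outcomes and covariates
    (𝒢 : MeasurableSpace Ω) (h𝒢 : 𝒢 ≤ m0)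
    -- global causal null: the `A i` are mutually independent and the vector `(A 1, …, A n)`
    -- is independent of `𝒢`
    (hindep : iIndep (fun j : Option (Fin n) =>
        j.elim 𝒢 (fun i => MeasurableSpace.comap (A i) inferInstance)) P)
    -- the initially revealed holdout set
    (I₀ : Finset (Fin n))
    -- the interactively chosen ordering `π`, the revealed sets `I t`, and the filtration `ℱ`
    (π : ℕ → Ω → Fin n) (I : ℕ → Ω → Finset (Fin n)) (ℱ : ℕ → MeasurableSpace Ω)
    (hI0 : ∀ ω, I 0 ω = I₀)
    (hIsucc : ∀ t, t + 1 ≤ n - I₀.card → ∀ ω, I (t+1) ω = insert (π (t+1) ω) (I t ω))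
    (hℱ0 : ℱ 0 = 𝒢 ⊔ ⨆ i ∈ I₀, MeasurableSpace.comap (A i) inferInstance)
    (hℱsucc : ∀ t, t + 1 ≤ n - I₀.card → ℱ (t+1) = ℱ t ⊔
        MeasurableSpace.comap (fun ω => A (π (t+1) ω) ω) inferInstance)
    -- `π (t+1)` is `ℱ t`-measurable with values outside the already revealed set
    (hπmeas : ∀ t, t + 1 ≤ n - I₀.card → Measurable[ℱ t] (π (t+1)))
    (hπnew : ∀ t, t + 1 ≤ n - I₀.card → ∀ ω, π (t+1) ω ∉ I t ω)
    -- the predictable bets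
    (w : ℕ → Ω → ℝ)
    (hwmeas : ∀ t, t + 1 ≤ n - I₀.card → Measurable[ℱ t] (w (t+1)))
    (hw : ∀ t, t + 1 ≤ n - I₀.card → ∀ᵐ ω ∂P, w (t+1) ω ∈
        Set.Icc (-(μ (π (t+1) ω) / (1 - μ (π (t+1) ω)))) 1)
    -- the wealth process
    (M : ℕ → Ω → ℝ)
    (hM : ∀ t, t ≤ n - I₀.card → ∀ ω, M t ω = ∏ j ∈ Finset.range t,
        (1 + w (j+1) ω * (A (π (j+1) ω) ω / μ (π (j+1) ω) - 1)))
    (α : ℝ) (hα : α ∈ Set.Ioo (0:ℝ) 1) :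
    ∀ᵐ ω ∂P,
      (P[Set.indicator {ω' | ∃ t, 1 ≤ t ∧ t ≤ n - I₀.card ∧ 1/α ≤ M t ω'}
          (fun _ => (1:ℝ)) | 𝒢]) ω ≤ α := by
  let z : Fin n → ℝ → ℝ := fun i a => a / μ i - 1
  have hreveal : IsInteractiveReveal 𝒢 A I₀ (n - I₀.card) π (fun t ω => I t ω) ℱ :=
    ⟨fun ω => by rw [hI0], fun t ht ω => by rw [hIsucc t ht, Finset.coe_insert], hℱ0, hℱsucc,
      hπmeas, hπnew⟩
  have hfair (i : Fin n) := integrable_and_integral_div_sub_one_eq_zero (hAmeas i) (hA01 i)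
    (hμ i).1 (hA1 i)
  have hfactor (t : ℕ) (ht : t < n - I₀.card) : ∀ᵐ ω ∂P,
      0 ≤ 1 + w (t + 1) ω * z (π (t + 1) ω) (A (π (t + 1) ω) ω) := by
    filter_upwards [hw t ht] with ω hω
    refine one_add_mul_div_sub_one_nonneg (hμ _) ?_ hω
    rcases hA01 (π (t + 1) ω) ω with h | h <;> simp [h]
  have hMwealth (t : ℕ) (ht : t ≤ n - I₀.card) : M t = wealth z A π w t := funext (hM t ht)
  rw [setOf_exists_le_congr hMwealth]
  exact ibet_conditional_type_one_error_control_general hAmeas h𝒢 hindep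
    (fun i => (measurable_id.div_const _).sub_const 1) (fun i => (hfair i).1)
    (fun i => (hfair i).2) hreveal hwmeas hfactor hα.1
end

section
/- Sampling without replacement (completely randomized experiment): under the global causal null, the conditional expectation of the interactively selected assignment given the revealed information equals the remaining proportion of treatments: for every t ≥ 1, E(A_{π_t} | ℱ_{t−1}) = (m − Σ_{i ∈ I_{t−1}} A_i)/(n − |I_{t−1}|) almost surely. -/
open MeasureTheory ProbabilityTheory
open scoped ENNReal

/-!
Write `ℋ J` for the σ-algebra generated by `𝒢` and `A i`, `i ∈ J`. By induction on the steps,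
`ℱ t` and `ℋ J` have the same trace on `{I t = J}`, so on the cell `{I t = J, π (t + 1) = j}` the
conditional expectation of `A (π (t + 1))` given `ℱ t` is that of the fixed variable `A j` given
`ℋ J`. A transposition of two indices outside `J` preserves the joint law of the assignments and
does not affect `ℋ J`; hence the conditional expectations of `A k` given `ℋ J`, `k ∉ J`, are all
equal, while their sum is the `ℋ J`-measurable number of treatments that remain.
-/

section AgreeOn

variable {Ω E : Type*} {m₁ m₂ : MeasurableSpace Ω} {s : Set Ω}

/-- Two σ-algebras agree on `s` if `s` belongs to both and they induce the same trace on `s`;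
membership of `s` in `m₂` is the case `t = univ`. -/
structure MeasurableSpaceAgreeOn (m₁ m₂ : MeasurableSpace Ω) (s : Set Ω) : Prop where
  measurableSet : MeasurableSet[m₁] s
  measurableSet_inter_iff : ∀ t, MeasurableSet[m₁] (s ∩ t) ↔ MeasurableSet[m₂] (s ∩ t)

namespace MeasurableSpaceAgreeOn

theorem refl (hs : MeasurableSet[m₁] s) : MeasurableSpaceAgreeOn m₁ m₁ s :=
  ⟨hs, fun _ => Iff.rfl⟩

theorem empty : MeasurableSpaceAgreeOn m₁ m₂ ∅ :=
  ⟨@MeasurableSet.empty _ m₁, fun t => by simp only [Set.empty_inter, MeasurableSet.empty]⟩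

theorem measurableSet_right (h : MeasurableSpaceAgreeOn m₁ m₂ s) : MeasurableSet[m₂] s := by
  simpa only [Set.inter_univ, h.measurableSet, true_iff] using h.measurableSet_inter_iff Set.univ

theorem symm (h : MeasurableSpaceAgreeOn m₁ m₂ s) : MeasurableSpaceAgreeOn m₂ m₁ s :=
  ⟨h.measurableSet_right, fun t => (h.measurableSet_inter_iff t).symm⟩

theorem mono {s' : Set Ω} (h : MeasurableSpaceAgreeOn m₁ m₂ s) (hs' : MeasurableSet[m₁] s')
    (hsub : s' ⊆ s) : MeasurableSpaceAgreeOn m₁ m₂ s' := by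
  refine ⟨hs', fun t => ?_⟩
  have hinter : s ∩ (s' ∩ t) = s' ∩ t :=
    Set.inter_eq_right.mpr (Set.inter_subset_left.trans hsub)
  simpa only [hinter] using h.measurableSet_inter_iff (s' ∩ t)

theorem measurableSet_iUnion_inter {κ : Type*} [Countable κ] {s : κ → Set Ω}
    (h : ∀ k, MeasurableSpaceAgreeOn m₁ m₂ (s k)) {t : Set Ω}
    (ht : MeasurableSet[m₁] ((⋃ k, s k) ∩ t)) : MeasurableSet[m₂] ((⋃ k, s k) ∩ t) := by
  rw [Set.iUnion_inter]
  refine MeasurableSet.iUnion fun k => ((h k).measurableSet_inter_iff t).mp ?_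
  have hinter : s k ∩ ((⋃ k, s k) ∩ t) = s k ∩ t := by
    rw [← Set.inter_assoc, Set.inter_eq_left.mpr (Set.subset_iUnion s k)]
  exact hinter ▸ (h k).measurableSet.inter ht

theorem iUnion {κ : Type*} [Countable κ] {s : κ → Set Ω}
    (h : ∀ k, MeasurableSpaceAgreeOn m₁ m₂ (s k)) : MeasurableSpaceAgreeOn m₁ m₂ (⋃ k, s k) :=
  ⟨MeasurableSet.iUnion fun k => (h k).measurableSet,
    fun _ => ⟨measurableSet_iUnion_inter h, measurableSet_iUnion_inter fun k => (h k).symm⟩⟩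

theorem le_of_iUnion_eq_univ {κ : Type*} [Countable κ] {m₀ : MeasurableSpace Ω}
    {m : κ → MeasurableSpace Ω} {s : κ → Set Ω} (h : ∀ k, MeasurableSpaceAgreeOn m₁ (m k) (s k))
    (hm : ∀ k, m k ≤ m₀) (hs : ⋃ k, s k = Set.univ) : m₁ ≤ m₀ := by
  intro t ht
  rw [← Set.univ_inter t, ← hs, Set.iUnion_inter]
  exact MeasurableSet.iUnion fun k => hm k _ <|
    ((h k).measurableSet_inter_iff t).mp ((h k).measurableSet.inter ht)

end MeasurableSpaceAgreeOn

theorem measurableSet_inter_iff_comap_val {m : MeasurableSpace Ω} (hs : MeasurableSet[m] s)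
    (t : Set Ω) : MeasurableSet[m] (s ∩ t) ↔
      MeasurableSet[m.comap ((↑) : s → Ω)] ((↑) ⁻¹' t : Set s) := by
  rw [← Subtype.image_preimage_coe]
  exact (MeasurableEmbedding.subtype_coe hs).measurableSet_image

theorem measurableSpaceAgreeOn_iff_comap_val (h₁ : MeasurableSet[m₁] s)
    (h₂ : MeasurableSet[m₂] s) : MeasurableSpaceAgreeOn m₁ m₂ s ↔
      m₁.comap ((↑) : s → Ω) = m₂.comap ((↑) : s → Ω) := by
  constructor
  · intro h
    ext u
    have hu : ((↑) ⁻¹' ((↑) '' u : Set Ω) : Set s) = u :=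
      Set.preimage_image_eq u Subtype.val_injective
    rw [← hu, ← measurableSet_inter_iff_comap_val h₁, ← measurableSet_inter_iff_comap_val h₂]
    exact h.measurableSet_inter_iff _
  · intro h
    refine ⟨h₁, fun t => ?_⟩
    rw [measurableSet_inter_iff_comap_val h₁, measurableSet_inter_iff_comap_val h₂, h]

theorem MeasurableSpaceAgreeOn.sup_comap [MeasurableSpace E] {f g : Ω → E}
    (h : MeasurableSpaceAgreeOn m₁ m₂ s) (hfg : Set.EqOn f g s) :
    MeasurableSpaceAgreeOn (m₁ ⊔ MeasurableSpace.comap f inferInstance)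
      (m₂ ⊔ MeasurableSpace.comap g inferInstance) s := by
  have htrace := (measurableSpaceAgreeOn_iff_comap_val h.measurableSet h.measurableSet_right).mp h
  have hcomp : f ∘ ((↑) : s → Ω) = g ∘ (↑) := funext fun ω => hfg ω.2
  have hleft : MeasurableSet[m₁ ⊔ MeasurableSpace.comap f inferInstance] s :=
    (le_sup_left : m₁ ≤ _) s h.measurableSet
  have hright : MeasurableSet[m₂ ⊔ MeasurableSpace.comap g inferInstance] s :=
    (le_sup_left : m₂ ≤ _) s h.measurableSet_right
  refine (measurableSpaceAgreeOn_iff_comap_val hleft hright).mpr ?_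
  simp only [MeasurableSpace.comap_sup, MeasurableSpace.comap_comp, htrace, hcomp]

end AgreeOn

theorem integrable_of_eq_zero_or_one {Ω : Type*} {m0 : MeasurableSpace Ω} {P : Measure Ω}
    [IsFiniteMeasure P] {X : Ω → ℝ} (hX : Measurable X) (hX01 : ∀ ω, X ω = 0 ∨ X ω = 1) :
    Integrable X P := by
  refine Integrable.of_bound hX.aestronglyMeasurable 1 (.of_forall fun ω => ?_)
  rcases hX01 ω with h | h <;> simp [h]

theorem integrable_apply_measurable_index {Ω ι E : Type*} {m0 : MeasurableSpace Ω} {P : Measure Ω}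
    [NormedAddCommGroup E] [Finite ι] [MeasurableSpace ι] [MeasurableSingletonClass ι]
    {A : ι → Ω → E} {π : Ω → ι} (hint : ∀ i, Integrable (A i) P) (hπ : Measurable π) :
    Integrable (fun ω => A (π ω) ω) P := by
  classical
  cases nonempty_fintype ι
  have hdecomp : (fun ω => A (π ω) ω) = fun ω => ∑ j, (π ⁻¹' {j}).indicator (A j) ω := by
    funext ω
    simp only [Set.indicator_apply, Set.mem_preimage, Set.mem_singleton_iff, Finset.sum_ite_eq,
      Finset.mem_univ, if_true]
  rw [hdecomp]
  exact integrable_finsetSum _ fun j _ => (hint j).indicator (hπ (measurableSet_singleton j))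

section CondExp

variable {Ω E : Type*} {m m₁ m₂ m0 : MeasurableSpace Ω} {P : Measure Ω}
  [NormedAddCommGroup E] [NormedSpace ℝ E] [CompleteSpace E]

theorem condExp_ae_eq_restrict_of_eqOn {s : Set Ω} {f g : Ω → E}
    (hm : m ≤ m0) (hf : Integrable f P) (hg : Integrable g P) (hs : MeasurableSet[m] s)
    (hfg : Set.EqOn f g s) : P[f | m] =ᵐ[P.restrict s] P[g | m] := by
  rw [ae_eq_restrict_iff_indicator_ae_eq (hm _ hs)]
  calc s.indicator (P[f | m]) =ᵐ[P] P[s.indicator f | m] := (condExp_indicator hf hs).symm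
    _ = P[s.indicator g | m] := by rw [Set.indicator_congr hfg]
    _ =ᵐ[P] s.indicator (P[g | m]) := condExp_indicator hg hs

theorem MeasurableSpaceAgreeOn.condExp_ae_eq_restrict [IsFiniteMeasure P] {s : Set Ω}
    {f g : Ω → E} (h : MeasurableSpaceAgreeOn m₁ m₂ s) (hm₁ : m₁ ≤ m0) (hm₂ : m₂ ≤ m0)
    (hf : Integrable f P) (hg : Integrable g P) (hfg : Set.EqOn f g s) :
    P[f | m₁] =ᵐ[P.restrict s] P[g | m₂] :=
  (condExp_ae_eq_restrict_of_measurableSpace_eq_on hm₁ hm₂ h.measurableSet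
    h.measurableSet_inter_iff).trans
    (condExp_ae_eq_restrict_of_eqOn hm₂ hf hg h.measurableSet_right hfg)

variable [MeasurableSpace E] [BorelSpace E]

theorem condExp_comap_ae_eq_of_identDistrib_prodMk [IsFiniteMeasure P] {β : Type*}
    [mβ : MeasurableSpace β] {W : Ω → β} {X Y : Ω → E} (hW : Measurable W)
    (hX : Integrable X P)
    (h : IdentDistrib (fun ω => (W ω, X ω)) (fun ω => (W ω, Y ω)) P P) :
    P[X | mβ.comap W] =ᵐ[P] P[Y | mβ.comap W] := by
  have hY : Integrable Y P := (h.comp measurable_snd).integrable_snd hX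
  refine ae_eq_condExp_of_forall_setIntegral_eq hW.comap_le hY
    (fun _ _ _ => integrable_condExp.integrableOn) ?_
    stronglyMeasurable_condExp.aestronglyMeasurable
  rintro _ ⟨T, hT, rfl⟩ -
  have hset (Z : Ω → E) : ∫ ω in W ⁻¹' T, Z ω ∂P =
      ∫ ω, (Prod.fst ⁻¹' T).indicator Prod.snd (W ω, Z ω) ∂P :=
    (integral_indicator (hW hT)).symm
  rw [setIntegral_condExp hW.comap_le hX ⟨T, hT, rfl⟩, hset X, hset Y]
  exact (h.comp (measurable_snd.indicator (measurable_fst hT))).integral_eq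

end CondExp

section Exchangeable

variable {Ω ι E : Type*} {m0 : MeasurableSpace Ω} {P : Measure Ω} [MeasurableSpace E]

/-- A family of random variables is exchangeable if its joint law is invariant under every
permutation of the index set. -/
def IsExchangeable (A : ι → Ω → E) (P : Measure Ω) : Prop :=
  ∀ σ : Equiv.Perm ι, IdentDistrib (fun ω i => A i ω) (fun ω i => A (σ i) ω) P P

theorem identDistrib_of_measure_preimage_singleton_eq [MeasurableSingletonClass E] {X Y : Ω → E}
    (hX : Measurable X) (hY : Measurable Y) {V : Set E} (hV : V.Countable)
    (hXV : ∀ ω, X ω ∈ V) (hYV : ∀ ω, Y ω ∈ V)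
    (hXY : ∀ v ∈ V, P (X ⁻¹' {v}) = P (Y ⁻¹' {v})) : IdentDistrib X Y P P := by
  refine ⟨hX.aemeasurable, hY.aemeasurable, Measure.ext fun B hB => ?_⟩
  have hsum {Z : Ω → E} (hZ : Measurable Z) (hZV : ∀ ω, Z ω ∈ V) :
      P (Z ⁻¹' B) = ∑' v : ↥(B ∩ V), P (Z ⁻¹' {(v : E)}) := by
    rw [tsum_measure_preimage_singleton (hV.mono Set.inter_subset_right)
      fun v _ => hZ (measurableSet_singleton v), Set.preimage_inter, Set.inter_eq_left.mpr]
    exact fun ω _ => hZV ω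
  rw [Measure.map_apply hX hB, Measure.map_apply hY hB, hsum hX hXV, hsum hY hYV]
  exact tsum_congr fun v => hXY v v.2.2

theorem isExchangeable_of_uniform [Countable ι] [MeasurableSingletonClass E] {A : ι → Ω → E}
    (hA : ∀ i, Measurable (A i)) {V : Set (ι → E)} (hV : V.Countable)
    (hperm : ∀ v ∈ V, ∀ σ : Equiv.Perm ι, v ∘ σ ∈ V) (hAV : ∀ ω, (fun i => A i ω) ∈ V)
    {p : ℝ≥0∞} (hunif : ∀ v ∈ V, P {ω | ∀ i, A i ω = v i} = p) : IsExchangeable A P := by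
  intro σ
  refine identDistrib_of_measure_preimage_singleton_eq (by fun_prop) (by fun_prop) hV hAV
    (fun ω => hperm _ (hAV ω) σ) fun v hv => ?_
  have hfiber : (fun ω i => A i ω) ⁻¹' {v} = {ω | ∀ i, A i ω = v i} := by
    ext ω; exact funext_iff
  have hfiber_perm : (fun ω i => A (σ i) ω) ⁻¹' {v} = {ω | ∀ i, A i ω = (v ∘ σ.symm) i} := by
    ext ω
    refine funext_iff.trans (σ.forall_congr fun i => ?_)
    simp only [Function.comp_apply, Equiv.symm_apply_apply]
  rw [hfiber, hfiber_perm, hunif v hv, hunif _ (hperm v hv σ.symm)]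

theorem isExchangeable_of_uniform_binary [Fintype ι] {A : ι → Ω → ℝ}
    (hA : ∀ i, Measurable (A i)) (hA01 : ∀ i ω, A i ω = 0 ∨ A i ω = 1) {c : ℝ}
    (hsum : ∀ ω, ∑ i, A i ω = c) {p : ℝ≥0∞}
    (hunif : ∀ v : ι → ℝ, (∀ i, v i = 0 ∨ v i = 1) → ∑ i, v i = c →
      P {ω | ∀ i, A i ω = v i} = p) : IsExchangeable A P := by
  have hfinite : {v : ι → ℝ | (∀ i, v i = 0 ∨ v i = 1) ∧ ∑ i, v i = c}.Finite :=
    (Set.Finite.pi' fun _ : ι => Set.toFinite ({0, 1} : Set ℝ)).subset fun _ hv => hv.1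
  exact isExchangeable_of_uniform hA hfinite.countable
    (fun v hv σ => ⟨fun i => hv.1 (σ i), (Equiv.sum_comp σ v).trans hv.2⟩)
    (fun ω => ⟨fun i => hA01 i ω, hsum ω⟩) fun v hv => hunif v hv.1 hv.2

end Exchangeable

section RevealedInfo

variable {Ω ι E : Type*} [MeasurableSpace E] {𝒢 m0 : MeasurableSpace Ω} {A : ι → Ω → E}

/-- The information available once the members of `J` have been unmasked: `𝒢` together with the
assignments `A i`, `i ∈ J`. -/
abbrev revealedInfo (𝒢 : MeasurableSpace Ω) (A : ι → Ω → E) (J : Finset ι) : MeasurableSpace Ω :=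
  𝒢 ⊔ ⨆ i ∈ J, MeasurableSpace.comap (A i) inferInstance

theorem revealedInfo_le (h𝒢 : 𝒢 ≤ m0) (hA : ∀ i, Measurable (A i)) (J : Finset ι) :
    revealedInfo 𝒢 A J ≤ m0 :=
  sup_le h𝒢 (iSup₂_le fun i _ => (hA i).comap_le)

theorem measurable_revealedInfo {J : Finset ι} {i : ι} (hi : i ∈ J) :
    Measurable[revealedInfo 𝒢 A J] (A i) :=
  measurable_iff_comap_le.mpr <|
    (le_iSup₂ (f := fun i (_ : i ∈ J) => MeasurableSpace.comap (A i) inferInstance) i hi).trans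
      le_sup_right

theorem revealedInfo_insert [DecidableEq ι] (j : ι) (J : Finset ι) :
    revealedInfo 𝒢 A (insert j J) =
      revealedInfo 𝒢 A J ⊔ MeasurableSpace.comap (A j) inferInstance := by
  rw [revealedInfo, revealedInfo, Finset.iSup_insert, sup_assoc,
    sup_comm (MeasurableSpace.comap _ _)]

theorem revealedInfo_eq_comap_prodMk (J : Finset ι) :
    revealedInfo 𝒢 A J =
      (𝒢.prod MeasurableSpace.pi).comap (fun ω => (ω, fun i : J => A i ω)) := by
  have hid : 𝒢.comap (fun ω => ω) = 𝒢 := MeasurableSpace.comap_id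
  rw [MeasurableSpace.comap_prodMk, MeasurableSpace.comap_process_pi, hid, revealedInfo,
    iSup_subtype]

theorem agreeOn_revealedInfo_insert [DecidableEq ι] [MeasurableSpace ι]
    [MeasurableSingletonClass ι] {ℱ : MeasurableSpace Ω} {I : Ω → Finset ι} {π : Ω → ι}
    (h : ∀ J, MeasurableSpaceAgreeOn ℱ (revealedInfo 𝒢 A J) {ω | I ω = J})
    (hπ : Measurable[ℱ] π) (hπI : ∀ ω, π ω ∉ I ω) (J : Finset ι) :
    MeasurableSpaceAgreeOn (ℱ ⊔ MeasurableSpace.comap (fun ω => A (π ω) ω) inferInstance)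
      (revealedInfo 𝒢 A J) {ω | insert (π ω) (I ω) = J} := by
  have hcover : {ω | insert (π ω) (I ω) = J} =
      ⋃ j : J, π ⁻¹' {(j : ι)} ∩ {ω | I ω = J.erase j} := by
    ext ω
    simp only [Set.mem_iUnion, Set.mem_inter_iff, Set.mem_preimage, Set.mem_singleton_iff,
      Set.mem_ofPred_eq, Subtype.exists, exists_prop]
    constructor
    · rintro rfl
      exact ⟨π ω, Finset.mem_insert_self _ _, rfl, (Finset.erase_insert (hπI ω)).symm⟩
    · rintro ⟨_, hj, rfl, hI⟩
      rw [hI, Finset.insert_erase hj]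
  rw [hcover]
  refine MeasurableSpaceAgreeOn.iUnion fun ⟨j, hj⟩ => ?_
  have hcell : MeasurableSpaceAgreeOn ℱ (revealedInfo 𝒢 A (J.erase j))
      (π ⁻¹' {j} ∩ {ω | I ω = J.erase j}) :=
    (h _).mono ((hπ (measurableSet_singleton _)).inter (h _).measurableSet) Set.inter_subset_right
  have hinfo : revealedInfo 𝒢 A J =
      revealedInfo 𝒢 A (J.erase j) ⊔ MeasurableSpace.comap (A j) inferInstance := by
    rw [← revealedInfo_insert, Finset.insert_erase hj]
  rw [hinfo]
  exact hcell.sup_comap fun ω hω => by rw [show π ω = j from hω.1]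

end RevealedInfo

section SamplingWithoutReplacement

variable {Ω ι : Type*} {𝒢 m0 : MeasurableSpace Ω} {P : Measure Ω} [IsProbabilityMeasure P]

theorem IsExchangeable.identDistrib_prodMk_restrict {β E : Type*} [mβ : MeasurableSpace β]
    [MeasurableSpace E] {A : ι → Ω → E} (hexch : IsExchangeable A P)
    {Z : Ω → β} (hZ : Measurable Z) (hindep : IndepFun Z (fun ω i => A i ω) P)
    {J : Finset ι} {j k : ι} (hj : j ∉ J) (hk : k ∉ J) :
    IdentDistrib (fun ω => ((Z ω, fun i : J => A i ω), A j ω))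
      (fun ω => ((Z ω, fun i : J => A i ω), A k ω)) P P := by
  classical
  have hindep_swap : IndepFun Z (fun ω i => A (Equiv.swap j k i) ω) P :=
    hindep.comp (φ := id) (ψ := fun (x : ι → E) i => x (Equiv.swap j k i)) measurable_id
      (by fun_prop)
  have hpair := (IdentDistrib.refl hZ.aemeasurable).prodMk (hexch (Equiv.swap j k)) hindep
    hindep_swap
  have hfix : ∀ i : J, Equiv.swap j k i = i := fun i =>
    Equiv.swap_apply_of_ne_of_ne (ne_of_mem_of_not_mem i.2 hj) (ne_of_mem_of_not_mem i.2 hk)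
  have hobs : Measurable fun z : β × (ι → E) => ((z.1, fun i : J => z.2 i), z.2 j) := by fun_prop
  simpa only [Function.comp_def, hfix, Equiv.swap_apply_left] using hpair.comp hobs

theorem IsExchangeable.condExp_revealedInfo_congr {E : Type*} [NormedAddCommGroup E]
    [NormedSpace ℝ E] [CompleteSpace E] [MeasurableSpace E] [BorelSpace E] {A : ι → Ω → E}
    (hexch : IsExchangeable A P) (hA : ∀ i, Measurable (A i)) (h𝒢 : 𝒢 ≤ m0)
    (hindep : Indep (⨆ i, MeasurableSpace.comap (A i) inferInstance) 𝒢 P)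
    {J : Finset ι} {j k : ι} (hint : Integrable (A j) P) (hj : j ∉ J) (hk : k ∉ J) :
    P[A j | revealedInfo 𝒢 A J] =ᵐ[P] P[A k | revealedInfo 𝒢 A J] := by
  have hid : Measurable[m0, 𝒢] id := measurable_id'' h𝒢
  have hindepFun : @IndepFun Ω Ω (ι → E) m0 𝒢 _ id (fun ω i => A i ω) P := by
    rw [IndepFun_iff_Indep (mβ := 𝒢), MeasurableSpace.comap_id, MeasurableSpace.comap_process_pi]
    exact hindep.symm
  rw [revealedInfo_eq_comap_prodMk]
  exact condExp_comap_ae_eq_of_identDistrib_prodMk (mβ := 𝒢.prod MeasurableSpace.pi)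
    (hid.prodMk (measurable_pi_lambda _ fun i => hA i)) hint
    (hexch.identDistrib_prodMk_restrict (mβ := 𝒢) hid hindepFun hj hk)

variable [Fintype ι] {A : ι → Ω → ℝ} {c : ℝ}

theorem sub_sum_ae_eq_sum_condExp_revealedInfo [DecidableEq ι] (hA : ∀ i, Measurable (A i))
    (hint : ∀ i, Integrable (A i) P) (hsum : ∀ᵐ ω ∂P, ∑ i, A i ω = c) (h𝒢 : 𝒢 ≤ m0)
    (J : Finset ι) :
    (fun ω => c - ∑ i ∈ J, A i ω) =ᵐ[P] ∑ k ∈ Jᶜ, P[A k | revealedInfo 𝒢 A J] := by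
  have hrest : (fun ω => c - ∑ i ∈ J, A i ω) =ᵐ[P] ∑ k ∈ Jᶜ, A k := by
    filter_upwards [hsum] with ω hω
    rw [Finset.sum_apply, ← hω, ← Finset.sum_add_sum_compl J, add_sub_cancel_left]
  have hmeas : Measurable[revealedInfo 𝒢 A J] fun ω => c - ∑ i ∈ J, A i ω :=
    measurable_const.sub (Finset.measurable_fun_sum J fun i hi => measurable_revealedInfo hi)
  have hintegrable : Integrable (fun ω => c - ∑ i ∈ J, A i ω) P :=
    (integrable_const c).sub (integrable_finsetSum J fun i _ => hint i)
  calc (fun ω => c - ∑ i ∈ J, A i ω)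
    _ = P[fun ω => c - ∑ i ∈ J, A i ω | revealedInfo 𝒢 A J] :=
      (condExp_of_stronglyMeasurable (revealedInfo_le h𝒢 hA J) hmeas.stronglyMeasurable
        hintegrable).symm
    _ =ᵐ[P] P[∑ k ∈ Jᶜ, A k | revealedInfo 𝒢 A J] := condExp_congr_ae hrest
    _ =ᵐ[P] ∑ k ∈ Jᶜ, P[A k | revealedInfo 𝒢 A J] := condExp_finsetSum (fun k _ => hint k) _

theorem IsExchangeable.condExp_revealedInfo_ae_eq
    (hexch : IsExchangeable A P) (hA : ∀ i, Measurable (A i)) (hint : ∀ i, Integrable (A i) P)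
    (hsum : ∀ᵐ ω ∂P, ∑ i, A i ω = c) (h𝒢 : 𝒢 ≤ m0)
    (hindep : Indep (⨆ i, MeasurableSpace.comap (A i) inferInstance) 𝒢 P)
    {J : Finset ι} {j : ι} (hj : j ∉ J) :
    P[A j | revealedInfo 𝒢 A J] =ᵐ[P]
      fun ω => (c - ∑ i ∈ J, A i ω) / (Fintype.card ι - J.card) := by
  classical
  have hequal : ∀ᵐ ω ∂P, ∀ k ∈ Jᶜ,
      P[A k | revealedInfo 𝒢 A J] ω = P[A j | revealedInfo 𝒢 A J] ω :=
    (Finset.eventually_all Jᶜ).mpr fun k hk =>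
      hexch.condExp_revealedInfo_congr hA h𝒢 hindep (hint k) (Finset.mem_compl.mp hk) hj
  have hcard : (Fintype.card ι - J.card : ℝ) = Jᶜ.card := by
    rw [Finset.card_compl, Nat.cast_sub (Finset.card_le_univ J)]
  have hcard_ne : (Jᶜ.card : ℝ) ≠ 0 :=
    Nat.cast_ne_zero.mpr (Finset.card_ne_zero_of_mem (Finset.mem_compl.mpr hj))
  filter_upwards [sub_sum_ae_eq_sum_condExp_revealedInfo hA hint hsum h𝒢 J, hequal]
    with ω hrestω hequalω
  rw [hcard, hrestω, Finset.sum_apply, Finset.sum_congr rfl hequalω, Finset.sum_const,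
    nsmul_eq_mul, mul_div_cancel_left₀ _ hcard_ne]

theorem IsExchangeable.condExp_apply_ae_eq [MeasurableSpace ι] [MeasurableSingletonClass ι]
    (hexch : IsExchangeable A P) (hA : ∀ i, Measurable (A i)) (hint : ∀ i, Integrable (A i) P)
    (hsum : ∀ᵐ ω ∂P, ∑ i, A i ω = c) (h𝒢 : 𝒢 ≤ m0)
    (hindep : Indep (⨆ i, MeasurableSpace.comap (A i) inferInstance) 𝒢 P)
    {ℱ : MeasurableSpace Ω} {I : Ω → Finset ι} {π : Ω → ι}
    (hℱ : ∀ J, MeasurableSpaceAgreeOn ℱ (revealedInfo 𝒢 A J) {ω | I ω = J})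
    (hπ : Measurable[ℱ] π) (hπI : ∀ ω, π ω ∉ I ω) :
    P[fun ω => A (π ω) ω | ℱ] =ᵐ[P]
      fun ω => (c - ∑ i ∈ I ω, A i ω) / (Fintype.card ι - (I ω).card) := by
  have hle : ℱ ≤ m0 := MeasurableSpaceAgreeOn.le_of_iUnion_eq_univ hℱ (revealedInfo_le h𝒢 hA)
    (Set.eq_univ_of_forall fun ω => Set.mem_iUnion.mpr ⟨I ω, rfl⟩)
  have hcell (J : Finset ι) (j : ι) : ∀ᵐ ω ∂P, ω ∈ π ⁻¹' {j} ∩ {ω | I ω = J} →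
      P[fun ω => A (π ω) ω | ℱ] ω = P[A j | revealedInfo 𝒢 A J] ω := by
    have hmeas : MeasurableSet[ℱ] (π ⁻¹' {j} ∩ {ω | I ω = J}) :=
      (hπ (measurableSet_singleton j)).inter (hℱ J).measurableSet
    refine (ae_restrict_iff' (hle _ hmeas)).mp ?_
    refine ((hℱ J).mono hmeas Set.inter_subset_right).condExp_ae_eq_restrict hle
      (revealedInfo_le h𝒢 hA J) (integrable_apply_measurable_index hint (hπ.mono hle le_rfl))
      (hint j) fun ω hω => ?_
    rw [show π ω = j from hω.1]
  have hproportion : ∀ᵐ ω ∂P, ∀ J j, j ∉ J → P[A j | revealedInfo 𝒢 A J] ω =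
      (c - ∑ i ∈ J, A i ω) / (Fintype.card ι - J.card) :=
    ae_all_iff.mpr fun J => ae_all_iff.mpr fun j => ae_all_iff.mpr fun hj =>
      hexch.condExp_revealedInfo_ae_eq hA hint hsum h𝒢 hindep hj
  filter_upwards [ae_all_iff.mpr fun J => ae_all_iff.mpr (hcell J), hproportion]
    with ω hcellω hproportionω
  rw [hcellω (I ω) (π ω) ⟨rfl, rfl⟩, hproportionω (I ω) (π ω) (hπI ω)]

end SamplingWithoutReplacement

section InteractiveRevelation

variable {Ω ι E : Type*} [DecidableEq ι] [MeasurableSpace ι] [MeasurableSpace E]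

/-- The interactive protocol, run for `T` steps from the holdout set `I₀`: at step `t + 1` an index
`π (t + 1)` outside the revealed set `I t` is chosen on the basis of the current information `ℱ t`,
and its assignment is then revealed. Choices are indexed from `1`. -/
structure IsInteractiveRevelation (𝒢 : MeasurableSpace Ω) (A : ι → Ω → E) (I₀ : Finset ι)
    (π : ℕ → Ω → ι) (I : ℕ → Ω → Finset ι) (ℱ : ℕ → MeasurableSpace Ω) (T : ℕ) : Prop where
  revealed_zero : ∀ ω, I 0 ω = I₀
  revealed_succ : ∀ t < T, ∀ ω, I (t + 1) ω = insert (π (t + 1) ω) (I t ω)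
  info_zero : ℱ 0 = revealedInfo 𝒢 A I₀
  info_succ : ∀ t < T,
    ℱ (t + 1) = ℱ t ⊔ MeasurableSpace.comap (fun ω => A (π (t + 1) ω) ω) inferInstance
  measurable_choice : ∀ t < T, Measurable[ℱ t] (π (t + 1))
  choice_notMem : ∀ t < T, ∀ ω, π (t + 1) ω ∉ I t ω

theorem IsInteractiveRevelation.agreeOn_revealedInfo [MeasurableSingletonClass ι]
    {𝒢 : MeasurableSpace Ω} {A : ι → Ω → E} {I₀ : Finset ι} {π : ℕ → Ω → ι}
    {I : ℕ → Ω → Finset ι} {ℱ : ℕ → MeasurableSpace Ω} {T : ℕ}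
    (h : IsInteractiveRevelation 𝒢 A I₀ π I ℱ T) {t : ℕ} (ht : t ≤ T) (J : Finset ι) :
    MeasurableSpaceAgreeOn (ℱ t) (revealedInfo 𝒢 A J) {ω | I t ω = J} := by
  induction t generalizing J with
  | zero =>
    simp only [h.revealed_zero, h.info_zero]
    by_cases hJ : I₀ = J
    · simpa only [hJ, Set.ofPred_true] using MeasurableSpaceAgreeOn.refl MeasurableSet.univ
    · simpa only [hJ, Set.ofPred_false] using MeasurableSpaceAgreeOn.empty
  | succ t ih =>
    simp only [h.revealed_succ t ht, h.info_succ t ht]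
    exact agreeOn_revealedInfo_insert (ih (Nat.le_of_succ_le ht)) (h.measurable_choice t ht)
      (h.choice_notMem t ht) J

end InteractiveRevelation

theorem ibet_without_replacement_condexp_general {Ω ι : Type*} [Fintype ι] [DecidableEq ι]
    [MeasurableSpace ι] [MeasurableSingletonClass ι] {m0 : MeasurableSpace Ω} {P : Measure Ω}
    [IsProbabilityMeasure P] {A : ι → Ω → ℝ} {c : ℝ} (hexch : IsExchangeable A P)
    (hA : ∀ i, Measurable (A i)) (hint : ∀ i, Integrable (A i) P)
    (hsum : ∀ᵐ ω ∂P, ∑ i, A i ω = c) {𝒢 : MeasurableSpace Ω} (h𝒢 : 𝒢 ≤ m0)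
    (hindep : Indep (⨆ i, MeasurableSpace.comap (A i) inferInstance) 𝒢 P) {I₀ : Finset ι}
    {π : ℕ → Ω → ι} {I : ℕ → Ω → Finset ι} {ℱ : ℕ → MeasurableSpace Ω} {T : ℕ}
    (hreveal : IsInteractiveRevelation 𝒢 A I₀ π I ℱ T) {t : ℕ} (ht : t < T) :
    P[fun ω => A (π (t + 1) ω) ω | ℱ t] =ᵐ[P]
      fun ω => (c - ∑ i ∈ I t ω, A i ω) / (Fintype.card ι - (I t ω).card) :=
  hexch.condExp_apply_ae_eq hA hint hsum h𝒢 hindep (fun J => hreveal.agreeOn_revealedInfo ht.le J)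
    (hreveal.measurable_choice t ht) (hreveal.choice_notMem t ht)

/-- **Sampling without replacement (completely randomized experiment).**
Under the global causal null, with `(A 1, …, A n)` uniformly distributed over binary vectors
summing to `m` and independent of `𝒢`, the conditional expectation of the interactively
selected assignment given the revealed information equals the remaining proportion of
treatments: `E(A (π t) | ℱ (t−1)) = (m − Σ_{i ∈ I (t−1)} A i) / (n − |I (t−1)|)` a.s. -/
theorem ibet_without_replacement_condexp
    {Ω : Type*} {m0 : MeasurableSpace Ω} (P : Measure Ω) [IsProbabilityMeasure P]
    (n m : ℕ) (hm : 1 ≤ m) (hmn : m ≤ n - 1)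
    -- the treatment assignments: a uniformly random binary vector with sum `m`
    (A : Fin n → Ω → ℝ) (hAmeas : ∀ i, Measurable (A i))
    (hA01 : ∀ i ω, A i ω = 0 ∨ A i ω = 1)
    (hAsum : ∀ ω, ∑ i, A i ω = (m : ℝ))
    (hAunif : ∀ v : Fin n → ℝ, (∀ i, v i = 0 ∨ v i = 1) → (∑ i, v i) = (m : ℝ) →
      P {ω | ∀ i, A i ω = v i} = ((n.choose m : ℝ≥0∞))⁻¹)
    -- the σ-algebra generated by all outcomes and covariates, independent of the vector `A`
    (𝒢 : MeasurableSpace Ω) (h𝒢 : 𝒢 ≤ m0)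
    (hindep : Indep (⨆ i, MeasurableSpace.comap (A i) inferInstance) 𝒢 P)
    -- the initially revealed holdout set
    (I₀ : Finset (Fin n))
    -- the interactively chosen ordering `π`, the revealed sets `I t`, and the filtration `ℱ`
    (π : ℕ → Ω → Fin n) (I : ℕ → Ω → Finset (Fin n)) (ℱ : ℕ → MeasurableSpace Ω)
    (hI0 : ∀ ω, I 0 ω = I₀)
    (hIsucc : ∀ t, t + 1 ≤ n - I₀.card → ∀ ω, I (t+1) ω = insert (π (t+1) ω) (I t ω))
    (hℱ0 : ℱ 0 = 𝒢 ⊔ ⨆ i ∈ I₀, MeasurableSpace.comap (A i) inferInstance)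
    (hℱsucc : ∀ t, t + 1 ≤ n - I₀.card → ℱ (t+1) = ℱ t ⊔
        MeasurableSpace.comap (fun ω => A (π (t+1) ω) ω) inferInstance)
    (hπmeas : ∀ t, t + 1 ≤ n - I₀.card → Measurable[ℱ t] (π (t+1)))
    (hπnew : ∀ t, t + 1 ≤ n - I₀.card → ∀ ω, π (t+1) ω ∉ I t ω) :
    ∀ t, t + 1 ≤ n - I₀.card →
      P[fun ω => A (π (t+1) ω) ω | ℱ t] =ᵐ[P]
        fun ω => ((m : ℝ) - ∑ i ∈ I t ω, A i ω) / ((n : ℝ) - (I t ω).card) := by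
  intro t ht
  simpa only [Fintype.card_fin] using ibet_without_replacement_condexp_general
    (isExchangeable_of_uniform_binary hAmeas hA01 hAsum hAunif) hAmeas
    (fun i => integrable_of_eq_zero_or_one (hAmeas i) (hA01 i)) (.of_forall hAsum) h𝒢 hindep
    ⟨hI0, hIsucc, hℱ0, hℱsucc, hπmeas, hπnew⟩ ht
end
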